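/- arXiv:1810.07283 — 2 statements merged into one kernel-verified Lean document; each statement's English description precedes it below -/
import Mathlib

section
/- Let k ≥ 2, ε > 0 and u ≥ 1. For every ε-locally differentially private mechanism Q ∈ D_ε, liminf_{n→∞} n^{u/2} r_{k,n}^{ℓ_u^u}(Q) ≥ k C_u M(k,ε)^{u/2}. -/
/-!
The bound is a Bayesian lower bound in a local neighbourhood of the uniform distribution.

**Local model.** By `exists_density`, a private mechanism has densities `f i` with respect to the law
`μ` of a privatized sample at the uniform distribution, and `f i ≤ e^ε f j`, `∑ f i = k` hold
pointwise. Put `g i = f i - 1`. At the distribution `p = 1/k + (a - mean a)/√n` one privatized sample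
has density `1 + (∑ a l * g l)/√n` relative to `μ` (`marginal_local`), so `n` samples have the
likelihood ratio `lik g a`. The parameter `a` ranges over the whole box `[-D, D]^k`: the direction
`(1, …, 1)` is not identified, which is harmless for a lower bound and keeps the coordinates free.

**Prior and posterior.** Give the coordinates of `a` independent `N(0, 1/η)` priors conditioned on
`[-D, D]`. With the other coordinates and the data fixed, `lik_slice` expands the logarithm of the
likelihood to second order: up to a factor tending to `1`, the posterior of `a i` is Gaussian with
precision `info g i y + η` restricted to `[-D, D]`, where `info g i y = (1/n) ∑ j, g i (y j)²`.
If its centre is well inside the interval, the posterior contains a truncated Gaussian which is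
symmetric about the centre, and convexity of `|·|^u` shows that any estimate of `a i` has
posterior risk at least about `(info + η)^(-u/2) * C_u` (`slice_gaussian`). Since
`a i - mean a` depends on `a i` with slope `1 - 1/k`, this costs a factor `(1 - 1/k)^u`
(`coord_bayes`). The centre fails to be well inside with small probability only, by Chebyshev's
inequality for the linear coefficient `lin` of the log-likelihood (`lin_moment`, `good_mass`).

**Energy inequality.** Summing over the coordinates, Jensen's inequality for `x ↦ x^(-u/2)` leaves a
bound in terms of `∑ i, info g i y`, hence of `∑ i, (f i - 1)²`. Privacy forces
`∑ i, (f i - 1)² ≤ k (e^ε - 1)² / g(d*)` pointwise (`energy_le`): after rescaling, `f` lies in the cube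
`[1, e^ε]^k`, a convex function is largest at a vertex of the cube, and the vertices correspond to
the integers `d` over which `d*` is optimal.

**Limits.** The result is the finite-sample bound `minimax_bound`. Letting `n → ∞`, then `D → ∞`
(`liminf_bound`), then `η → 0` gives `(1 - 1/k)^u k ((e^ε - 1)²/g(d*))^(-u/2) C_u`, which is
`k C_u M^(u/2)` (`const_eq`).
-/

open MeasureTheory ProbabilityTheory Filter Real
open scoped ENNReal NNReal

noncomputable section

/-- The probability simplex Δ_k ⊆ ℝ^k. -/
def simplex (k : ℕ) : Set (Fin k → ℝ) :=
  {p | (∀ i, 0 ≤ p i) ∧ ∑ i, p i = 1}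

/-- ε-local differential privacy for a Markov kernel from `Fin k` to `Y`. -/
def IsPrivate {Y : Type} [MeasurableSpace Y] {k : ℕ} (ε : ℝ) (Q : Kernel (Fin k) Y) : Prop :=
  IsMarkovKernel Q ∧
    ∀ S : Set Y, MeasurableSet S → ∀ x x' : Fin k,
      Q x S ≤ ENNReal.ofReal (Real.exp ε) * Q x' S

/-- The marginal distribution m = pQ of a privatized sample. -/
def marginal {Y : Type} [MeasurableSpace Y] {k : ℕ} (Q : Kernel (Fin k) Y)
    (p : Fin k → ℝ) : Measure Y :=
  ∑ i, ENNReal.ofReal (p i) • Q i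

/-- Worst-case ℓ_u^u risk of the mechanism `Q` with estimator `est` from `n` samples. -/
def risk {Y : Type} [MeasurableSpace Y] (k n : ℕ) (u : ℝ) (Q : Kernel (Fin k) Y)
    (est : (Fin n → Y) → Fin k → ℝ) : ℝ≥0∞ :=
  ⨆ p ∈ simplex k,
    ∫⁻ y, ENNReal.ofReal (∑ i, |est y i - p i| ^ u)
      ∂(Measure.pi fun _ : Fin n => marginal Q p)

/-- Minimax ℓ_u^u risk of the mechanism `Q` from `n` samples. -/
def minimaxRisk {Y : Type} [MeasurableSpace Y] (k n : ℕ) (u : ℝ) (Q : Kernel (Fin k) Y) : ℝ≥0∞ :=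
  ⨅ (est : (Fin n → Y) → Fin k → ℝ) (_ : Measurable est), risk k n u Q est

/-- Output alphabet Y_{k,d} : subsets of {1,…,k} of size d. -/
def Out (k d : ℕ) : Type := {S : Finset (Fin k) // S.card = d}

instance (k d : ℕ) : Fintype (Out k d) := Subtype.fintype _
instance (k d : ℕ) : MeasurableSpace (Out k d) := ⊤
instance (k d : ℕ) : MeasurableSingletonClass (Out k d) := ⟨fun _ => trivial⟩
instance (k d : ℕ) : DecidableEq (Out k d) := Subtype.instDecidableEq

/-- Q_{k,ε,d}(y|i). -/
def schemeP (k : ℕ) (ε : ℝ) (d : ℕ) (i : Fin k) (y : Out k d) : ℝ :=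
  (if i ∈ y.1 then Real.exp ε else 1) /
    ((k-1).choose (d-1) * Real.exp ε + (k-1).choose d)

/-- The scheme Q_{k,ε,d} as a Markov kernel. -/
def schemeKernel (k : ℕ) (ε : ℝ) (d : ℕ) : Kernel (Fin k) (Out k d) :=
  Kernel.ofFunOfCountable fun i =>
    ∑ y : Out k d, ENNReal.ofReal (schemeP k ε d i y) • Measure.dirac y

/-- Constant A of the empirical estimator. -/
def Aconst (k d : ℕ) (ε : ℝ) : ℝ :=
  (((k:ℝ)-1) * Real.exp ε + ((k:ℝ)-1)*((k:ℝ)-d)/d) / (((k:ℝ)-d)*(Real.exp ε - 1))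

/-- Constant B of the empirical estimator. -/
def Bconst (k d : ℕ) (ε : ℝ) : ℝ :=
  (((d:ℝ)-1) * Real.exp ε + ((k:ℝ)-d)) / (((k:ℝ)-d)*(Real.exp ε - 1))

/-- t_i(y^n): the number of privatized samples whose i-th coordinate is 1. -/
def tcount {k d n : ℕ} (i : Fin k) (y : Fin n → Out k d) : ℕ :=
  (Finset.univ.filter fun j => i ∈ (y j).1).card

/-- The empirical estimator p̂ under Q_{k,ε,d}. -/
def empEst (k d n : ℕ) (ε : ℝ) (y : Fin n → Out k d) (i : Fin k) : ℝ :=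
  Aconst k d ε * ((tcount i y : ℝ) / n) - Bconst k d ε

/-- Marginal probability (pQ_{k,ε,d})(y). -/
def margP (k : ℕ) (ε : ℝ) (d : ℕ) (p : Fin k → ℝ) (y : Out k d) : ℝ :=
  ∑ i, p i * schemeP k ε d i y

/-- Membership in D_{ε,E}: a finite-output ε-LDP scheme, given by the matrix
`q j v = Q(j|v)`, whose conditional probability ratios take only values 1 and e^ε. -/
def memDEE (k L : ℕ) (ε : ℝ) (q : Fin L → Fin k → ℝ) : Prop :=
  (∀ j v, 0 ≤ q j v) ∧ (∀ v, ∑ j, q j v = 1) ∧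
  (∀ j v v', q j v ≤ Real.exp ε * q j v') ∧
  (∀ j v, q j v / (⨅ v', q j v') ∈ ({1, Real.exp ε} : Set ℝ))

/-- q_j = (1/k) Σ_v q_{jv}. -/
def qrow {k L : ℕ} (q : Fin L → Fin k → ℝ) (j : Fin L) : ℝ :=
  (1/(k:ℝ)) * ∑ v, q j v

/-- A finite-output scheme (matrix) as a Markov kernel. -/
def matKernel (k L : ℕ) (q : Fin L → Fin k → ℝ) : Kernel (Fin k) (Fin L) :=
  Kernel.ofFunOfCountable fun v =>
    ∑ j, ENNReal.ofReal (q j v) • Measure.dirac j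

/-- C_u = E|X|^u for X standard normal. -/
def Cmom (u : ℝ) : ℝ := ∫ x, |x| ^ u ∂(gaussianReal 0 1)

/-- g(s) = (s e^ε + k − s)² / (s(k−s)). -/
def gfun (ε k s : ℝ) : ℝ := (s * Real.exp ε + k - s)^2 / (s * (k - s))

/-- d* is a minimizer of (d e^ε + k − d)²/(d(k−d)) over d ∈ {1,…,k−1}. -/
def IsOptDstar (k : ℕ) (ε : ℝ) (dstar : ℕ) : Prop :=
  dstar ∈ Finset.Icc 1 (k-1) ∧
    ∀ d ∈ Finset.Icc 1 (k-1), gfun ε k dstar ≤ gfun ε k d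

/-- M(k,ε). -/
def Mconst (k : ℕ) (ε : ℝ) (dstar : ℕ) : ℝ :=
  (((k:ℝ)-1)^2 / ((k:ℝ)^2 * (Real.exp ε - 1)^2)) * gfun ε k dstar

/-- The prior set P_n = {p ∈ Δ_k : ‖p − p_U‖₂ ≤ D/√n}. -/
def Pball (k : ℕ) (D : ℝ) (n : ℕ) : Set (Fin k → ℝ) :=
  {p | p ∈ simplex k ∧ Real.sqrt (∑ i, (p i - 1/(k:ℝ))^2) ≤ D / Real.sqrt n}

/-- The uniform distribution on P_n: normalized (k−1)-dimensional Hausdorff measure. -/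
def unifP (k : ℕ) (D : ℝ) (n : ℕ) : Measure (Fin k → ℝ) :=
  ((μH[((k:ℝ)-1)]) (Pball k D n))⁻¹ • (μH[((k:ℝ)-1)]).restrict (Pball k D n)

/-- Component-wise optimal Bayes ℓ_u^u risk for the finite-output scheme `q`,
with the uniform prior on P_n. -/
def bayesRisk (k L : ℕ) (u : ℝ) (q : Fin L → Fin k → ℝ) (D : ℝ) (n : ℕ) (i : Fin k) : ℝ≥0∞ :=
  ⨅ est : (Fin n → Fin L) → ℝ,
    ∫⁻ p, (∑ y : Fin n → Fin L,
        (∏ j, ENNReal.ofReal (∑ v, p v * q (y j) v)) *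
          ENNReal.ofReal (|est y - p i| ^ u))
      ∂(unifP k D n)

end

/-! ### The energy inequality for private likelihood ratios -/

/-- Minimality of `d*` cleared of denominators, with `B = (e^ε - 1)² / g(d*)`. In this form it also
covers the endpoints `d = 0` and `d = k`, where the left side vanishes. -/
lemma vertex_bound {k : ℕ} {ε : ℝ} (hε : 0 < ε) {dstar : ℕ}
    (hd : IsOptDstar k ε dstar) (d : ℕ) (hdk : d ≤ k) :
    (Real.exp ε - 1) ^ 2 * (d * (k - d)) ≤
      (Real.exp ε - 1) ^ 2 / gfun ε k dstar * (d * Real.exp ε + k - d) ^ 2 := by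
  have hE : 1 < Real.exp ε := Real.one_lt_exp_iff.mpr hε
  have hg0 : ∀ m ∈ Finset.Icc 1 (k-1), 0 < gfun ε k m := by
    intro m hm
    rw [Finset.mem_Icc] at hm
    have h1 : (1:ℝ) ≤ m := by exact_mod_cast hm.1
    have h2 : (m:ℝ) + 1 ≤ k := by exact_mod_cast (by omega : m + 1 ≤ k)
    have : 0 < (m:ℝ) * Real.exp ε := by positivity
    unfold gfun
    apply div_pos
    · apply pow_pos; linarith
    · apply mul_pos <;> linarith
  have hgd := hg0 _ hd.1
  rcases Nat.eq_zero_or_pos d with rfl | hd0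
  · simp; positivity
  rcases Nat.eq_or_lt_of_le hdk with rfl | hdk'
  · simp; positivity
  have hmem : d ∈ Finset.Icc 1 (k-1) := by rw [Finset.mem_Icc]; omega
  have h := hd.2 d hmem
  have hpos : 0 < (d:ℝ) * (k - d) := by
    have h1 : (0:ℝ) < d := by exact_mod_cast hd0
    have h2 : (d:ℝ) < k := by exact_mod_cast hdk'
    apply mul_pos <;> linarith
  have hgeq : (d * Real.exp ε + k - d) ^ 2 = gfun ε k d * (d * (k - d)) := by
    rw [gfun, div_mul_cancel₀ _ hpos.ne']
  rw [hgeq, div_mul_eq_mul_div, le_div_iff₀ hgd]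
  have : 0 ≤ (Real.exp ε - 1) ^ 2 * (d * (k - d)) := by positivity
  nlinarith

/-- Any likelihood-ratio vector of a private mechanism at the uniform distribution has squared
distance at most `k B` from the constant vector. The Euclidean norm minus a multiple of the
coordinate sum is convex, so it suffices to look at the vertices of the cube `[1, e^ε]^k`. -/
lemma energy_le {k : ℕ} (hk : 2 ≤ k) {ε : ℝ} (hε : 0 < ε) {dstar : ℕ}
    (hd : IsOptDstar k ε dstar) (f : Fin k → ℝ) (h0 : ∀ i, 0 ≤ f i)
    (hr : ∀ i j, f i ≤ Real.exp ε * f j) (hs : ∑ i, f i = k) :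
    ∑ i, (f i - 1) ^ 2 ≤ k * ((Real.exp ε - 1) ^ 2 / gfun ε k dstar) := by
  set B := (Real.exp ε - 1) ^ 2 / gfun ε k dstar with hB
  have hE : 1 < Real.exp ε := Real.one_lt_exp_iff.mpr hε
  have hk0 : (0:ℝ) < k := by exact_mod_cast (by omega : 0 < k)
  have hB0 : 0 ≤ B := by
    have := vertex_bound hε hd 1 (by omega)
    rw [← hB] at this
    have h2 : (2:ℝ) ≤ k := by exact_mod_cast hk
    push_cast at this
    by_contra hneg
    have h3 : 0 < (1 * Real.exp ε + k - 1) ^ 2 := by apply pow_pos; linarith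
    have h4 : 0 ≤ (Real.exp ε - 1) ^ 2 * (1 * ((k:ℝ) - 1)) := by
      apply mul_nonneg (sq_nonneg _); linarith
    nlinarith
  -- Dividing by the smallest coordinate puts `f` into the cube `[1, e^ε]^k`.
  obtain ⟨i0, -, hi0⟩ := Finset.exists_min_image (Finset.univ : Finset (Fin k)) f
    ⟨⟨0, by omega⟩, Finset.mem_univ _⟩
  have hm : 0 < f i0 := by
    rcases (h0 i0).lt_or_eq with h | h
    · exact h
    exfalso
    have : ∀ i, f i = 0 := fun i => le_antisymm (by simpa [← h] using hr i i0) (h0 i)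
    simp [this] at hs
    linarith
  set lam := (1 + B) / k with hlam
  have hlam0 : 0 ≤ lam := by positivity
  let Φ : (Fin k → ℝ) → ℝ := fun v => ‖WithLp.toLp 2 v‖ - √lam * ∑ i, v i
  have hconv : ConvexOn ℝ Set.univ Φ := by
    refine ⟨convex_univ, ?_⟩
    intro x _ y _ a b ha hb _
    have h1 : ‖WithLp.toLp 2 (a • x + b • y)‖ ≤
        a * ‖WithLp.toLp 2 x‖ + b * ‖WithLp.toLp 2 y‖ := by
      rw [WithLp.toLp_add, WithLp.toLp_smul, WithLp.toLp_smul]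
      refine (norm_add_le _ _).trans ?_
      rw [norm_smul, norm_smul, Real.norm_of_nonneg ha, Real.norm_of_nonneg hb]
    have h2 : ∑ i, (a • x + b • y) i = a * ∑ i, x i + b * ∑ i, y i := by
      simp [Finset.sum_add_distrib, Finset.mul_sum]
    simp only [Φ, h2, smul_eq_mul]
    nlinarith
  let v : Fin k → ℝ := fun i => (f i0)⁻¹ * f i
  have hv : v ∈ convexHull ℝ (Set.pi Set.univ fun _ : Fin k => ({1, Real.exp ε} : Set ℝ)) := by
    rw [convexHull_pi]
    intro i _
    rw [convexHull_pair, segment_eq_Icc hE.le]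
    constructor
    · simp only [v]
      rw [inv_mul_eq_div, one_le_div hm]
      exact hi0 i (Finset.mem_univ _)
    · simp only [v]
      rw [inv_mul_eq_div, div_le_iff₀ hm]
      exact hr i i0
  obtain ⟨w, hw, hvw⟩ := hconv.exists_ge_of_mem_convexHull (Set.subset_univ _) hv
  have hwΦ : Φ w ≤ 0 := by
    let s := Finset.univ.filter fun i => w i = Real.exp ε
    have hw' : ∀ i, w i = if i ∈ s then Real.exp ε else 1 := by
      intro i
      have := hw i (Set.mem_univ _)
      simp only [Set.mem_insert_iff, Set.mem_singleton_iff] at this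
      by_cases h : w i = Real.exp ε
      · simp [s, h]
      · simp [s, h]; tauto
    have hcount : ∀ a b : ℝ, ∑ i, (if i ∈ s then a else b) = s.card * a + (k - s.card) * b := by
      intro a b
      rw [Finset.sum_ite]
      have h1 : (Finset.univ.filter fun i => i ∈ s) = s := by ext; simp
      have h2 : ((Finset.univ.filter fun i => i ∉ s).card : ℝ) = k - s.card := by
        have : (Finset.univ.filter fun i => i ∉ s) = sᶜ := by ext; simp
        rw [this, Finset.card_compl, Nat.cast_sub (by simpa using s.card_le_univ)]
        simp
      rw [Finset.sum_const, Finset.sum_const, nsmul_eq_mul, nsmul_eq_mul, h1, h2]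
    have hsc : s.card ≤ k := by simpa using s.card_le_univ
    have hsumw : ∑ i, w i = s.card * Real.exp ε + k - s.card := by
      rw [Finset.sum_congr rfl fun i _ => hw' i, hcount]; ring
    have hsqw : ∑ i, w i ^ 2 = s.card * Real.exp ε ^ 2 + (k - s.card) := by
      have : ∀ i, w i ^ 2 = if i ∈ s then Real.exp ε ^ 2 else 1 := by
        intro i; rw [hw' i]; split_ifs <;> simp
      rw [Finset.sum_congr rfl fun i _ => this i, hcount]; ring
    have hnn : 0 ≤ ∑ i, w i := Finset.sum_nonneg fun i _ => by
      rw [hw' i]; split_ifs <;> positivity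
    simp only [Φ, sub_nonpos]
    rw [EuclideanSpace.norm_eq]
    simp only [Real.norm_eq_abs, sq_abs]
    rw [← Real.sqrt_sq hnn, ← Real.sqrt_mul hlam0]
    apply Real.sqrt_le_sqrt
    rw [hsqw, hsumw, hlam, div_mul_eq_mul_div, le_div_iff₀ hk0]
    have := vertex_bound hε hd s.card hsc
    rw [← hB] at this
    nlinarith
  have hvΦ : ‖WithLp.toLp 2 v‖ ≤ √lam * ∑ i, v i := by
    have := hvw.trans hwΦ
    simp only [Φ] at this
    linarith
  have hvsum : ∑ i, v i = (f i0)⁻¹ * k := by simp only [v]; rw [← Finset.mul_sum, hs]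
  have hvsq : ∑ i, v i ^ 2 ≤ lam * ((f i0)⁻¹ * k) ^ 2 := by
    rw [EuclideanSpace.norm_eq, hvsum] at hvΦ
    simp only [Real.norm_eq_abs, sq_abs] at hvΦ
    have hnn : 0 ≤ ∑ i, v i ^ 2 := Finset.sum_nonneg fun i _ => sq_nonneg _
    have h := pow_le_pow_left₀ (Real.sqrt_nonneg _) hvΦ 2
    rwa [Real.sq_sqrt hnn, mul_pow, Real.sq_sqrt hlam0] at h
  have hfsq : ∑ i, f i ^ 2 ≤ lam * k ^ 2 := by
    have h1 : ∑ i, v i ^ 2 = ((f i0)⁻¹) ^ 2 * ∑ i, f i ^ 2 := by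
      simp only [v, mul_pow]; rw [← Finset.mul_sum]
    rw [h1, mul_pow, mul_left_comm] at hvsq
    exact le_of_mul_le_mul_left hvsq (by positivity)
  have hexp : ∑ i, (f i - 1) ^ 2 = ∑ i, f i ^ 2 - k := by
    have : ∀ i, (f i - 1) ^ 2 = f i ^ 2 - 2 * f i + 1 := fun i => by ring
    rw [Finset.sum_congr rfl fun i _ => this i, Finset.sum_add_distrib, Finset.sum_sub_distrib,
      ← Finset.mul_sum, hs]
    simp; ring
  rw [hexp]
  have : lam * (k:ℝ) ^ 2 = k + k * B := by rw [hlam]; field_simp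
  linarith

/-! ### One-dimensional estimates: second-order expansion and almost Gaussian posteriors -/

/-- `∏ (1 + x_j)` equals `exp (∑ x_j - ∑ x_j² / 2)` up to a factor `exp (± 2 n δ³)`. -/
lemma prod_expansion {n : ℕ} (x : Fin n → ℝ) {δ : ℝ} (hδ : δ ≤ 1 / 2) (hx : ∀ j, |x j| ≤ δ) :
    Real.exp (-(2 * n * δ ^ 3)) * Real.exp (∑ j, x j - (∑ j, x j ^ 2) / 2) ≤ ∏ j, (1 + x j) ∧
    ∏ j, (1 + x j) ≤ Real.exp (2 * n * δ ^ 3) * Real.exp (∑ j, x j - (∑ j, x j ^ 2) / 2) := by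
  have hlog : ∀ j, |Real.log (1 + x j) - (x j - x j ^ 2 / 2)| ≤ 2 * δ ^ 3 := by
    intro j
    have hj := hx j
    have h1 : |(-(x j))| < 1 := by rw [abs_neg]; linarith
    have h := Real.abs_log_sub_add_sum_range_le h1 2
    simp only [Finset.sum_range_succ, Finset.sum_range_zero, abs_neg, sub_neg_eq_add] at h
    norm_num at h
    have e : -x j + x j ^ 2 / 2 + Real.log (1 + x j) =
      Real.log (1 + x j) - (x j - x j ^ 2 / 2) := by ring
    rw [e] at h
    refine h.trans ?_
    rw [div_le_iff₀ (by linarith)]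
    have h3 : |x j| ^ 3 ≤ δ ^ 3 := pow_le_pow_left₀ (abs_nonneg _) hj 3
    have h4 : 0 ≤ δ ^ 3 := pow_nonneg ((abs_nonneg _).trans hj) 3
    nlinarith
  have hpos : ∀ j, 0 < 1 + x j := by
    intro j
    have := (abs_le.mp (hx j)).1
    linarith
  have hprod : ∏ j, (1 + x j) = Real.exp (∑ j, Real.log (1 + x j)) := by
    rw [Real.exp_sum]
    exact Finset.prod_congr rfl fun j _ => (Real.exp_log (hpos j)).symm
  have hsum : |∑ j, Real.log (1 + x j) - (∑ j, x j - (∑ j, x j ^ 2) / 2)| ≤ 2 * n * δ ^ 3 := by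
    have e : ∑ j, Real.log (1 + x j) - (∑ j, x j - (∑ j, x j ^ 2) / 2)
        = ∑ j, (Real.log (1 + x j) - (x j - x j ^ 2 / 2)) := by
      rw [Finset.sum_sub_distrib, Finset.sum_sub_distrib, Finset.sum_div]
    rw [e]
    refine (Finset.abs_sum_le_sum_abs _ _).trans ((Finset.sum_le_sum fun j _ => hlog j).trans ?_)
    simp; linarith
  rw [abs_le] at hsum
  rw [hprod, ← Real.exp_add, ← Real.exp_add, Real.exp_le_exp, Real.exp_le_exp]
  constructor <;> linarith

/-- Truncated absolute moment of the standard normal distribution. -/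
noncomputable def cTrunc (u r : ℝ) : ℝ≥0∞ :=
  ∫⁻ x in Set.Icc (-r) r, ENNReal.ofReal (|x| ^ u) ∂(gaussianReal 0 1)

lemma cTrunc_ne_top {u r : ℝ} (hu : 0 ≤ u) : cTrunc u r ≠ ∞ := by
  have : cTrunc u r ≤ ∫⁻ x in Set.Icc (-r) r, ENNReal.ofReal (|r| ^ u) ∂(gaussianReal 0 1) := by
    refine setLIntegral_mono measurable_const fun x hx => ENNReal.ofReal_le_ofReal ?_
    apply Real.rpow_le_rpow (abs_nonneg _) _ hu
    rw [abs_le]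
    exact ⟨by linarith [hx.1, le_abs_self r], hx.2.trans (le_abs_self r)⟩
  refine ne_top_of_le_ne_top ?_ this
  rw [lintegral_const]
  exact ENNReal.mul_ne_top ENNReal.ofReal_ne_top (measure_ne_top _ _)

/-- The truncated moments exhaust `C_u`. -/
lemma le_iSup_cTrunc (u : ℝ) : ENNReal.ofReal (Cmom u) ≤ ⨆ m : ℕ, cTrunc u m := by
  have h1 : ENNReal.ofReal (Cmom u) ≤ ∫⁻ x, ENNReal.ofReal (|x| ^ u) ∂(gaussianReal 0 1) := by
    by_cases hi : Integrable (fun x : ℝ => |x| ^ u) (gaussianReal 0 1)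
    · rw [Cmom, ofReal_integral_eq_lintegral_ofReal hi]
      exact ae_of_all _ fun x => Real.rpow_nonneg (abs_nonneg _) _
    · rw [Cmom, integral_undef hi]; simp
  refine h1.trans (le_of_eq ?_)
  have h2 : (⋃ m : ℕ, Set.Icc (-(m:ℝ)) m) = Set.univ := by
    ext x
    simp only [Set.mem_iUnion, Set.mem_univ, iff_true]
    obtain ⟨m, hm⟩ := exists_nat_ge |x|
    exact ⟨m, abs_le.mp hm⟩
  rw [← setLIntegral_univ, ← h2, setLIntegral_iUnion_of_directed]
  · rfl
  · apply Monotone.directed_le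
    intro a b hab
    have : (a:ℝ) ≤ b := by exact_mod_cast hab
    exact Set.Icc_subset_Icc (by linarith) this

/-- Among all centres, a symmetric law on an interval has least `u`-th absolute moment about its
own centre, by convexity of `|·|^u`. -/
lemma symm_moment {u r : ℝ} (hu : 1 ≤ u) (s c : ℝ) (hc : 0 ≤ c) :
    ENNReal.ofReal (c ^ u) * cTrunc u r ≤
      ∫⁻ x in Set.Icc (-r) r, ENNReal.ofReal (|s - c * x| ^ u) ∂(gaussianReal 0 1) := by
  have hu0 : 0 ≤ u := by linarith
  have hmeas : ∀ s c : ℝ, Measurable fun x : ℝ => ENNReal.ofReal (|s - c * x| ^ u) := by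
    intro s c; fun_prop
  have hneg : ∫⁻ x in Set.Icc (-r) r, ENNReal.ofReal (|s - c * x| ^ u) ∂(gaussianReal 0 1) =
      ∫⁻ x in Set.Icc (-r) r, ENNReal.ofReal (|s + c * x| ^ u) ∂(gaussianReal 0 1) := by
    have hmap : (gaussianReal 0 1).map (fun x : ℝ => -x) = gaussianReal 0 1 := by
      rw [gaussianReal_map_neg, neg_zero]
    conv_lhs => rw [← hmap]
    rw [setLIntegral_map measurableSet_Icc (hmeas s c) measurable_neg]
    have : (fun x : ℝ => -x) ⁻¹' Set.Icc (-r) r = Set.Icc (-r) r := by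
      ext x
      simp only [Set.mem_preimage, Set.mem_Icc]
      constructor <;> rintro ⟨h1, h2⟩ <;> constructor <;> linarith
    rw [this]
    simp
  have hconv : ∀ a b : ℝ, 2 * |b| ^ u ≤ |a - b| ^ u + |a + b| ^ u := by
    intro a b
    have hcv := (convexOn_rpow hu).2 (Set.mem_Ici.mpr (abs_nonneg (a - b)))
      (Set.mem_Ici.mpr (abs_nonneg (a + b))) (by norm_num : (0:ℝ) ≤ 1/2)
      (by norm_num : (0:ℝ) ≤ 1/2) (by norm_num)
    simp only [smul_eq_mul] at hcv
    have h1 : |b| ≤ 1/2 * |a - b| + 1/2 * |a + b| := by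
      have := abs_sub (a + b) (a - b)
      have e : a + b - (a - b) = 2 * b := by ring
      rw [e, abs_mul, abs_two] at this
      linarith
    have h2 := Real.rpow_le_rpow (abs_nonneg b) h1 hu0
    linarith
  have h2 : ENNReal.ofReal (c ^ u) * cTrunc u r =
      ∫⁻ x in Set.Icc (-r) r, ENNReal.ofReal (|c * x| ^ u) ∂(gaussianReal 0 1) := by
    rw [cTrunc, ← lintegral_const_mul _ (by fun_prop)]
    refine lintegral_congr fun x => ?_
    rw [← ENNReal.ofReal_mul (by positivity), abs_mul, Real.mul_rpow (abs_nonneg _) (abs_nonneg _),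
      abs_of_nonneg hc]
  rw [h2]
  have h3 : 2 * ∫⁻ x in Set.Icc (-r) r, ENNReal.ofReal (|c * x| ^ u) ∂(gaussianReal 0 1) ≤
      2 * ∫⁻ x in Set.Icc (-r) r, ENNReal.ofReal (|s - c * x| ^ u) ∂(gaussianReal 0 1) := by
    conv_rhs => rw [two_mul]
    nth_rw 2 [hneg]
    rw [← lintegral_add_left (hmeas s c), ← lintegral_const_mul _ (by fun_prop)]
    refine lintegral_mono fun x => ?_
    have : (2:ℝ≥0∞) = ENNReal.ofReal 2 := by simp
    rw [this, ← ENNReal.ofReal_mul (by norm_num),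
      ← ENNReal.ofReal_add (by positivity) (by positivity)]
    exact ENNReal.ofReal_le_ofReal (hconv s (c * x))
  exact (ENNReal.mul_le_mul_iff_right (by norm_num) (by norm_num)).mp h3

/-- **Bayes risk of an almost Gaussian posterior.** If the unnormalised posterior density `h` on
`[-D, D]` agrees up to factors `exp (± ρ)` with a Gaussian one of precision `W` and centre `T / W`
well inside the interval, then every point estimate `s` has posterior risk at least
`exp (-2ρ) W^{-u/2} cTrunc u (R√η)`. -/
lemma slice_gaussian {u η D R W T K ρ : ℝ} (hu : 1 ≤ u) (hη : 0 < η) (hW : η ≤ W) (hR : 0 ≤ R)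
    (hT : |T| ≤ η * (D - R)) (hK : 0 ≤ K) (h : ℝ → ℝ) (hm : Measurable h)
    (hlo : ∀ t, |t| ≤ D → K * Real.exp (-ρ) * Real.exp (t * T - t ^ 2 * W / 2) ≤ h t)
    (hhi : ∀ t, |t| ≤ D → h t ≤ K * Real.exp ρ * Real.exp (t * T - t ^ 2 * W / 2)) (s : ℝ) :
    ENNReal.ofReal (Real.exp (-(2 * ρ)) * W ^ (-(u / 2))) * cTrunc u (R * √η) *
        ∫⁻ t in Set.Icc (-D) D, ENNReal.ofReal (h t) ≤
      ∫⁻ t in Set.Icc (-D) D, ENNReal.ofReal (h t) * ENNReal.ofReal (|s - t| ^ u) := by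
  have hW0 : 0 < W := hη.trans_le hW
  set c := T / W with hc
  set v : ℝ≥0 := ⟨W⁻¹, by positivity⟩ with hv
  have hv0 : v ≠ 0 := by
    intro hh
    have : (v:ℝ) = 0 := by rw [hh]; rfl
    have h2 : W⁻¹ = 0 := this
    exact hW0.ne' (inv_eq_zero.mp h2)
  have hvr : (v:ℝ) = W⁻¹ := rfl
  have hcD : |c| ≤ D - R := by
    have hDR : 0 ≤ D - R := nonneg_of_mul_nonneg_right ((abs_nonneg _).trans hT) hη
    rw [hc, abs_div, abs_of_pos hW0, div_le_iff₀ hW0]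
    nlinarith
  -- Completing the square identifies the comparison density as a Gaussian one.
  set K' := K * Real.exp (W * c ^ 2 / 2) * √(2 * π * v) with hK'
  have hK'0 : 0 ≤ K' := by positivity
  have hsq : ∀ t, K * Real.exp (t * T - t ^ 2 * W / 2) = K' * gaussianPDFReal c v t := by
    intro t
    have hne : √(2 * π * v) ≠ 0 := by
      have : 0 < (v:ℝ) := by rw [hvr]; positivity
      positivity
    have e : Real.exp (t * T - t ^ 2 * W / 2)
        = Real.exp (W * c ^ 2 / 2) * Real.exp (-(t - c) ^ 2 / (2 * v)) := by
      rw [← Real.exp_add, hvr, hc]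
      congr 1
      field_simp
      ring
    rw [e, gaussianPDFReal, hK']
    field_simp
  have hup : ∫⁻ t in Set.Icc (-D) D, ENNReal.ofReal (h t) ≤ ENNReal.ofReal (K' * Real.exp ρ) := by
    calc ∫⁻ t in Set.Icc (-D) D, ENNReal.ofReal (h t)
        ≤ ∫⁻ t in Set.Icc (-D) D, ENNReal.ofReal (K' * Real.exp ρ) * gaussianPDF c v t := by
          refine setLIntegral_mono (by fun_prop) fun t ht => ?_
          rw [gaussianPDF, ← ENNReal.ofReal_mul (by positivity)]
          refine ENNReal.ofReal_le_ofReal ((hhi t (abs_le.mpr ht)).trans (le_of_eq ?_))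
          rw [mul_right_comm, hsq]; ring
      _ ≤ ∫⁻ t, ENNReal.ofReal (K' * Real.exp ρ) * gaussianPDF c v t :=
          setLIntegral_le_lintegral _ _
      _ = ENNReal.ofReal (K' * Real.exp ρ) := by
          rw [lintegral_const_mul _ (by fun_prop), lintegral_gaussianPDF_eq_one _ hv0, mul_one]
  have hlow : ENNReal.ofReal (K' * Real.exp (-ρ)) *
      (ENNReal.ofReal (W ^ (-(u / 2))) * cTrunc u (R * √η)) ≤
      ∫⁻ t in Set.Icc (-D) D, ENNReal.ofReal (h t) * ENNReal.ofReal (|s - t| ^ u) := by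
    set q : ℝ := (√W)⁻¹ with hq
    have hq0 : 0 < q := by positivity
    have hqu : q ^ u = W ^ (-(u / 2)) := by
      rw [hq, Real.sqrt_eq_rpow, ← Real.rpow_neg hW0.le, ← Real.rpow_mul hW0.le]
      congr 1; ring
    have hmapg : (gaussianReal 0 1).map (fun x : ℝ => c + q * x) = gaussianReal c v := by
      have e : (fun x : ℝ => c + q * x) = (fun x => c + x) ∘ (fun x => q * x) := rfl
      rw [e, ← Measure.map_map (by fun_prop) (by fun_prop), gaussianReal_map_const_mul,
        gaussianReal_map_const_add]
      congr 1
      · ring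
      · ext
        simp [hvr, hq, Real.sq_sqrt hW0.le]
    have hsm := symm_moment (r := R * √η) hu (s - c) q hq0.le
    rw [hqu] at hsm
    calc ENNReal.ofReal (K' * Real.exp (-ρ)) *
          (ENNReal.ofReal (W ^ (-(u / 2))) * cTrunc u (R * √η))
        ≤ ENNReal.ofReal (K' * Real.exp (-ρ)) * ∫⁻ x in Set.Icc (-(R * √η)) (R * √η),
            ENNReal.ofReal (|s - c - q * x| ^ u) ∂(gaussianReal 0 1) := by gcongr
      _ ≤ ENNReal.ofReal (K' * Real.exp (-ρ)) * ∫⁻ x in (fun x => c + q * x) ⁻¹' Set.Icc (-D) D,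
            ENNReal.ofReal (|s - (c + q * x)| ^ u) ∂(gaussianReal 0 1) := by
          simp only [sub_add_eq_sub_sub]
          gcongr
          intro x hx
          have hxr : |x| ≤ R * √η := abs_le.mpr hx
          have h1 : |q * x| ≤ R := by
            rw [abs_mul, abs_of_pos hq0, hq, inv_mul_le_iff₀ (by positivity)]
            refine hxr.trans ?_
            rw [mul_comm]
            gcongr
          have h2 := abs_add_le c (q * x)
          exact abs_le.mp (by linarith : |c + q * x| ≤ D)
      _ = ENNReal.ofReal (K' * Real.exp (-ρ)) * ∫⁻ t in Set.Icc (-D) D,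
            ENNReal.ofReal (|s - t| ^ u) ∂(gaussianReal c v) := by
          rw [← hmapg, setLIntegral_map measurableSet_Icc (by fun_prop) (by fun_prop)]
      _ = ∫⁻ t in Set.Icc (-D) D, ENNReal.ofReal (K' * Real.exp (-ρ)) *
            (gaussianPDF c v t * ENNReal.ofReal (|s - t| ^ u)) := by
          rw [gaussianReal_of_var_ne_zero _ hv0, setLIntegral_withDensity_eq_setLIntegral_mul _
            (by fun_prop) (by fun_prop) measurableSet_Icc, lintegral_const_mul _ (by fun_prop)]
          rfl
      _ ≤ ∫⁻ t in Set.Icc (-D) D, ENNReal.ofReal (h t) * ENNReal.ofReal (|s - t| ^ u) := by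
          refine setLIntegral_mono (by fun_prop) fun t ht => ?_
          rw [← mul_assoc]
          gcongr
          rw [gaussianPDF, ← ENNReal.ofReal_mul (by positivity)]
          refine ENNReal.ofReal_le_ofReal (le_trans (le_of_eq ?_) (hlo t (abs_le.mpr ht)))
          rw [mul_right_comm K, hsq]; ring
  refine le_trans ?_ hlow
  calc _ ≤ ENNReal.ofReal (Real.exp (-(2 * ρ)) * W ^ (-(u / 2))) * cTrunc u (R * √η) *
        ENNReal.ofReal (K' * Real.exp ρ) := by gcongr
    _ = _ := by
      rw [mul_right_comm, ← mul_assoc, ← ENNReal.ofReal_mul (by positivity),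
        ← ENNReal.ofReal_mul (by positivity)]
      congr 2
      have : Real.exp (-ρ) = Real.exp (-(2 * ρ)) * Real.exp ρ := by
        rw [← Real.exp_add]; congr 1; ring
      rw [this]; ring

set_option linter.unusedSectionVars false

section LocalModel

variable {Y : Type} [MeasurableSpace Y] {k n : ℕ}

/-! ### The local model -/

/-- Score of the local model in direction `a`: the density of the privatized law at
`1/k + (a - mean a)/√n`, relative to the law at the uniform distribution, is
`1 + tilt g a / √n`. -/
def tilt (g : Fin k → Y → ℝ) (a : Fin k → ℝ) (y : Y) : ℝ := ∑ l, a l * g l y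

/-- Likelihood ratio of `n` privatized samples in the local model. -/
noncomputable def lik (g : Fin k → Y → ℝ) (a : Fin k → ℝ) (y : Fin n → Y) : ℝ :=
  ∏ j, (1 + tilt g a (y j) / √n)

/-- Empirical Fisher information about the `i`-th coordinate. -/
noncomputable def info (g : Fin k → Y → ℝ) (i : Fin k) (y : Fin n → Y) : ℝ :=
  (∑ j, g i (y j) ^ 2) / n

/-- Linear coefficient of the log-likelihood as a function of the `i`-th coordinate of the local
parameter; it depends on the other coordinates of `a` only. -/
noncomputable def lin (g : Fin k → Y → ℝ) (i : Fin k) (a : Fin k → ℝ) (y : Fin n → Y) : ℝ :=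
  (∑ j, g i (y j)) / √n - (∑ j, tilt g (Function.update a i 0) (y j) * g i (y j)) / n

lemma tilt_update (g : Fin k → Y → ℝ) (a : Fin k → ℝ) (i : Fin k) (t : ℝ) (y : Y) :
    tilt g (Function.update a i t) y = tilt g (Function.update a i 0) y + t * g i y := by
  unfold tilt
  rw [← Finset.add_sum_erase _ _ (Finset.mem_univ i),
    ← Finset.add_sum_erase (a := i) (f := fun l => Function.update a i 0 l * g l y) _
      (Finset.mem_univ i)]
  have : ∀ l ∈ Finset.univ.erase i, Function.update a i t l * g l y
      = Function.update a i 0 l * g l y := by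
    intro l hl
    rw [Function.update_of_ne (Finset.ne_of_mem_erase hl),
      Function.update_of_ne (Finset.ne_of_mem_erase hl)]
  rw [Finset.sum_congr rfl this]
  simp; ring

lemma abs_tilt_le {g : Fin k → Y → ℝ} {G : ℝ} (hG : ∀ l y, |g l y| ≤ G) (a : Fin k → ℝ) (y : Y) :
    |tilt g a y| ≤ G * ∑ l, |a l| := by
  unfold tilt
  refine (Finset.abs_sum_le_sum_abs _ _).trans ?_
  rw [Finset.mul_sum]
  refine Finset.sum_le_sum fun l _ => ?_
  rw [abs_mul, mul_comm]
  gcongr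
  exact hG l y

lemma abs_tilt_le' {g : Fin k → Y → ℝ} {G D : ℝ} (hG0 : 0 ≤ G) (hG : ∀ l y, |g l y| ≤ G)
    {a : Fin k → ℝ} (ha : ∀ l, |a l| ≤ D) (y : Y) : |tilt g a y| ≤ k * D * G := by
  refine (abs_tilt_le hG a y).trans ?_
  have : ∑ l, |a l| ≤ k * D := (Finset.sum_le_sum fun l _ => ha l).trans (by simp)
  nlinarith

lemma measurable_tilt {g : Fin k → Y → ℝ} (hg : ∀ l, Measurable (g l)) :
    Measurable fun p : (Fin k → ℝ) × Y => tilt g p.1 p.2 := by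
  unfold tilt
  refine Finset.measurable_sum _ fun l _ => ?_
  exact ((measurable_pi_apply l).comp measurable_fst).mul ((hg l).comp measurable_snd)

lemma measurable_lik {g : Fin k → Y → ℝ} (hg : ∀ l, Measurable (g l)) :
    Measurable fun p : (Fin k → ℝ) × (Fin n → Y) => lik g p.1 p.2 := by
  unfold lik
  refine Finset.measurable_prod _ fun j _ => ?_
  refine measurable_const.add (Measurable.div_const ?_ _)
  exact (measurable_tilt hg).comp
    (measurable_fst.prodMk ((measurable_pi_apply j).comp measurable_snd))

lemma measurable_info {g : Fin k → Y → ℝ} (hg : ∀ l, Measurable (g l)) (i : Fin k) :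
    Measurable fun y : Fin n → Y => info g i y := by
  unfold info
  refine Measurable.div_const (Finset.measurable_sum _ fun j _ => ?_) _
  exact ((hg i).comp (measurable_pi_apply j)).pow_const 2

lemma measurable_lin {g : Fin k → Y → ℝ} (hg : ∀ l, Measurable (g l)) (i : Fin k) :
    Measurable fun p : (Fin k → ℝ) × (Fin n → Y) => lin g i p.1 p.2 := by
  unfold lin
  have hgi : ∀ j, Measurable fun p : (Fin k → ℝ) × (Fin n → Y) => g i (p.2 j) := fun j =>
    (hg i).comp ((measurable_pi_apply j).comp measurable_snd)
  refine Measurable.sub (Measurable.div_const (Finset.measurable_sum _ fun j _ => hgi j) _)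
    (Measurable.div_const (Finset.measurable_sum _ fun j _ => ?_) _)
  refine Measurable.mul ?_ (hgi j)
  refine (measurable_tilt hg).comp (Measurable.prodMk ?_
    ((measurable_pi_apply j).comp measurable_snd))
  exact measurable_update'.comp (measurable_fst.prodMk measurable_const)

lemma info_nonneg (g : Fin k → Y → ℝ) (i : Fin k) (y : Fin n → Y) : 0 ≤ info g i y := by
  unfold info; positivity

lemma lik_nonneg {g : Fin k → Y → ℝ} {G D : ℝ} (hG0 : 0 ≤ G) (hG : ∀ l y, |g l y| ≤ G)
    (hδ : k * D * G / √n ≤ 1 / 2) {a : Fin k → ℝ} (ha : ∀ l, |a l| ≤ D) (y : Fin n → Y) :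
    0 ≤ lik g a y := by
  refine Finset.prod_nonneg fun j _ => ?_
  have h1 := abs_tilt_le' hG0 hG ha (y j)
  have h2 : |tilt g a (y j) / √n| ≤ k * D * G / √n := by
    rw [abs_div, abs_of_nonneg (Real.sqrt_nonneg _)]; gcongr
  have := (abs_le.mp h2).1
  linarith

/-! ### Truncated Gaussian priors and the posterior of one coordinate -/

/-- Gaussian weight on `[-D, D]`, the unnormalised prior of one local coordinate. -/
noncomputable def weight1 (η D : ℝ) : Measure ℝ :=
  (volume.restrict (Set.Icc (-D) D)).withDensity fun t => ENNReal.ofReal (Real.exp (-(η * t ^ 2 / 2)))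

/-- Gaussian prior `N(0, 1/η)` conditioned on `[-D, D]`. -/
noncomputable def prior1 (η D : ℝ) : Measure ℝ := (weight1 η D Set.univ)⁻¹ • weight1 η D

lemma lintegral_weight1 (η D : ℝ) (f : ℝ → ℝ≥0∞) :
    ∫⁻ t, f t ∂(weight1 η D) =
      ∫⁻ t in Set.Icc (-D) D, ENNReal.ofReal (Real.exp (-(η * t ^ 2 / 2))) * f t := by
  rw [weight1, lintegral_withDensity_eq_lintegral_mul_non_measurable _ (by fun_prop)
    (ae_of_all _ fun t => ENNReal.ofReal_lt_top)]
  rfl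

lemma weight1_univ (η D : ℝ) : weight1 η D Set.univ =
    ∫⁻ t in Set.Icc (-D) D, ENNReal.ofReal (Real.exp (-(η * t ^ 2 / 2))) := by
  rw [← lintegral_one, lintegral_weight1]; simp

lemma weight1_univ_ne_zero {η D : ℝ} (hD : 0 < D) : weight1 η D Set.univ ≠ 0 := by
  rw [weight1_univ, ← pos_iff_ne_zero, setLIntegral_pos_iff (by fun_prop)]
  have : (Function.support fun t : ℝ => ENNReal.ofReal (Real.exp (-(η * t ^ 2 / 2)))) = Set.univ := by
    ext t; simp [Real.exp_pos]
  rw [this, Set.univ_inter, Real.volume_Icc]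
  simp; linarith

lemma weight1_univ_ne_top {η D : ℝ} (hη : 0 < η) : weight1 η D Set.univ ≠ ∞ := by
  rw [weight1_univ]
  have : ∫⁻ t in Set.Icc (-D) D, ENNReal.ofReal (Real.exp (-(η * t ^ 2 / 2))) ≤
      ∫⁻ t in Set.Icc (-D) D, 1 := by
    refine lintegral_mono fun t => ?_
    rw [ENNReal.ofReal_le_one, Real.exp_le_one_iff]
    have := sq_nonneg t
    simp only [Left.neg_nonpos_iff]; positivity
  refine ne_top_of_le_ne_top ?_ this
  simp

lemma isProb_prior1 {η D : ℝ} (hη : 0 < η) (hD : 0 < D) : IsProbabilityMeasure (prior1 η D) := by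
  constructor
  rw [prior1, Measure.smul_apply, smul_eq_mul,
    ENNReal.inv_mul_cancel (weight1_univ_ne_zero hD) (weight1_univ_ne_top hη)]

lemma ae_prior1 (η D : ℝ) : ∀ᵐ t ∂(prior1 η D), |t| ≤ D := by
  have h1 : ∀ᵐ t ∂(weight1 η D), |t| ≤ D := by
    refine (withDensity_absolutelyContinuous _ _).ae_le ?_
    filter_upwards [ae_restrict_mem measurableSet_Icc] with t ht
    exact abs_le.mpr ht
  exact Measure.ae_smul_measure h1 _

/-- The second moment of the truncated Gaussian prior is bounded uniformly in the truncation. -/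
lemma prior1_moment {η : ℝ} (hη : 0 < η) : ∃ A : ℝ≥0∞, A ≠ ∞ ∧ ∀ D : ℝ, 1 ≤ D →
    ∫⁻ t, ENNReal.ofReal (t ^ 2) ∂(prior1 η D) ≤ A := by
  set N : ℝ≥0∞ := ∫⁻ t : ℝ, ENNReal.ofReal (4 / η * Real.exp (-(η / 4) * t ^ 2)) with hN
  have hNtop : N ≠ ∞ := by
    have hi : Integrable fun t : ℝ => 4 / η * Real.exp (-(η / 4) * t ^ 2) :=
      (integrable_exp_neg_mul_sq (by positivity)).const_mul _
    exact ((hasFiniteIntegral_iff_ofReal (ae_of_all _ fun t => by positivity)).mp hi.2).ne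
  refine ⟨(weight1 η 1 Set.univ)⁻¹ * N, ENNReal.mul_ne_top
    (ENNReal.inv_ne_top.mpr (weight1_univ_ne_zero one_pos)) hNtop, fun D hD => ?_⟩
  rw [prior1, lintegral_smul_measure, smul_eq_mul]
  gcongr ?_ * ?_
  · rw [ENNReal.inv_le_inv, weight1_univ, weight1_univ]
    exact lintegral_mono_set (Set.Icc_subset_Icc (by linarith) hD)
  · rw [lintegral_weight1]
    refine (setLIntegral_le_lintegral _ _).trans (lintegral_mono fun t => ?_)
    rw [← ENNReal.ofReal_mul (by positivity)]
    refine ENNReal.ofReal_le_ofReal ?_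
    have h1 : η / 4 * t ^ 2 ≤ Real.exp (η / 4 * t ^ 2) := by
      have := Real.add_one_le_exp (η / 4 * t ^ 2); linarith
    have h2 : Real.exp (-(η / 4) * t ^ 2) =
        Real.exp (-(η * t ^ 2 / 2)) * Real.exp (η / 4 * t ^ 2) := by
      rw [← Real.exp_add]; congr 1; ring
    rw [h2]
    have h3 : t ^ 2 = 4 / η * (η / 4 * t ^ 2) := by field_simp
    calc Real.exp (-(η * t ^ 2 / 2)) * t ^ 2
        = 4 / η * (Real.exp (-(η * t ^ 2 / 2)) * (η / 4 * t ^ 2)) := by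
          rw [h3]; field_simp
      _ ≤ _ := by gcongr

/-- As a function of the `i`-th coordinate of the local parameter, the log-likelihood is quadratic
up to a uniformly small error. -/
lemma lik_slice {g : Fin k → Y → ℝ} {G D : ℝ} (hn : 0 < n)
    (hG0 : 0 ≤ G) (hG : ∀ l y, |g l y| ≤ G) (hδ : k * D * G / √n ≤ 1 / 2)
    (i : Fin k) (a : Fin k → ℝ) (y : Fin n → Y) (ha : ∀ l, l ≠ i → |a l| ≤ D) :
    ∃ K : ℝ, 0 ≤ K ∧ ∀ t, |t| ≤ D →
      Real.exp (-(2 * n * (k * D * G / √n) ^ 3)) *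
          (K * Real.exp (t * lin g i a y - t ^ 2 * info g i y / 2)) ≤
        lik g (Function.update a i t) y ∧
      lik g (Function.update a i t) y ≤
        Real.exp (2 * n * (k * D * G / √n) ^ 3) *
          (K * Real.exp (t * lin g i a y - t ^ 2 * info g i y / 2)) := by
  have hn' : (0:ℝ) < n := by exact_mod_cast hn
  have hsn : 0 < √(n:ℝ) := Real.sqrt_pos.mpr hn'
  have hsn2 : √(n:ℝ) ^ 2 = n := Real.sq_sqrt hn'.le
  obtain ⟨b, hb⟩ : ∃ b : Fin n → ℝ, ∀ j, tilt g (Function.update a i 0) (y j) = b j :=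
    ⟨_, fun _ => rfl⟩
  refine ⟨Real.exp (∑ j, b j / √n - (∑ j, (b j) ^ 2) / n / 2), Real.exp_nonneg _, fun t ht => ?_⟩
  have hat : ∀ l, |Function.update a i t l| ≤ D := by
    intro l
    by_cases h : l = i
    · subst h; simpa using ht
    · rw [Function.update_of_ne h]; exact ha l h
  have hx : ∀ j, |tilt g (Function.update a i t) (y j) / √n| ≤ k * D * G / √n := by
    intro j
    rw [abs_div, abs_of_pos hsn]
    gcongr
    exact abs_tilt_le' hG0 hG hat (y j)
  have h := prod_expansion (fun j => tilt g (Function.update a i t) (y j) / √n) hδ hx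
  have e : ∑ j, tilt g (Function.update a i t) (y j) / √n -
      (∑ j, (tilt g (Function.update a i t) (y j) / √n) ^ 2) / 2 =
      (∑ j, b j / √n - (∑ j, (b j) ^ 2) / n / 2) +
        (t * lin g i a y - t ^ 2 * info g i y / 2) := by
    simp only [tilt_update g a i t, hb, lin, info, div_pow, hsn2]
    rw [← Finset.sum_div, ← Finset.sum_div, ← Finset.sum_div]
    have e1 : ∑ j, (b j + t * g i (y j)) = ∑ j, b j + t * ∑ j, g i (y j) := by
      rw [Finset.sum_add_distrib, Finset.mul_sum]
    have e2 : ∑ j, (b j + t * g i (y j)) ^ 2 =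
        ∑ j, b j ^ 2 + 2 * t * ∑ j, b j * g i (y j) + t ^ 2 * ∑ j, g i (y j) ^ 2 := by
      rw [Finset.mul_sum, Finset.mul_sum, ← Finset.sum_add_distrib, ← Finset.sum_add_distrib]
      exact Finset.sum_congr rfl fun j _ => by ring
    rw [e1, e2]
    ring
  rw [e, Real.exp_add] at h
  exact h

lemma measurable_lik_update (g : Fin k → Y → ℝ) (i : Fin k)
    (a : Fin k → ℝ) (y : Fin n → Y)  :
    Measurable fun t : ℝ => lik g (Function.update a i t) y := by
  have : (fun t : ℝ => lik g (Function.update a i t) y) = fun t =>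
      ∏ j, (1 + (tilt g (Function.update a i 0) (y j) + t * g i (y j)) / √n) := by
    funext t
    unfold lik
    exact Finset.prod_congr rfl fun j _ => by rw [tilt_update]
  rw [this]
  fun_prop

/-- Bayes risk of one local coordinate, the other coordinates of the local parameter being known. -/
lemma slice_prior {g : Fin k → Y → ℝ} {G D η R u : ℝ} (hn : 0 < n)
    (hG0 : 0 ≤ G) (hG : ∀ l y, |g l y| ≤ G) (hδ : k * D * G / √n ≤ 1 / 2)
    (hu : 1 ≤ u) (hη : 0 < η) (hR : 0 ≤ R) (i : Fin k) (a : Fin k → ℝ) (y : Fin n → Y)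
    (ha : ∀ l, l ≠ i → |a l| ≤ D) (hT : |lin g i a y| ≤ η * (D - R)) (s : ℝ) :
    ENNReal.ofReal (Real.exp (-(2 * (2 * n * (k * D * G / √n) ^ 3))) *
        (info g i y + η) ^ (-(u / 2))) * cTrunc u (R * √η) *
        ∫⁻ t, ENNReal.ofReal (lik g (Function.update a i t) y) ∂(prior1 η D) ≤
      ∫⁻ t, ENNReal.ofReal (lik g (Function.update a i t) y) *
        ENNReal.ofReal (|s - t| ^ u) ∂(prior1 η D) := by
  obtain ⟨K, hK, hbd⟩ := lik_slice hn hG0 hG hδ i a y ha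
  have hmeas := measurable_lik_update g i a y
  generalize 2 * (n:ℝ) * (k * D * G / √n) ^ 3 = ρ at hbd ⊢
  have hmul : ∀ t, Real.exp (t * lin g i a y - t ^ 2 * (info g i y + η) / 2) =
      Real.exp (-(η * t ^ 2 / 2)) * Real.exp (t * lin g i a y - t ^ 2 * info g i y / 2) := by
    intro t
    rw [← Real.exp_add]; congr 1; ring
  have hmain := slice_gaussian (W := info g i y + η) (D := D) (K := K) (ρ := ρ) hu hη
    (by linarith [info_nonneg g i y]) hR hT hK
    (fun t => Real.exp (-(η * t ^ 2 / 2)) * lik g (Function.update a i t) y)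
    (Measurable.mul (by fun_prop) hmeas)
    (fun t ht => by
      refine le_trans (le_of_eq ?_) (mul_le_mul_of_nonneg_left (hbd t ht).1 (Real.exp_nonneg _))
      rw [hmul]; ring)
    (fun t ht => by
      refine le_trans (mul_le_mul_of_nonneg_left (hbd t ht).2 (Real.exp_nonneg _)) (le_of_eq ?_)
      rw [hmul]; ring) s
  rw [prior1, lintegral_smul_measure, lintegral_smul_measure, smul_eq_mul, smul_eq_mul,
    mul_left_comm, lintegral_weight1, lintegral_weight1]
  refine mul_le_mul_right ?_ _
  simpa only [ENNReal.ofReal_mul (Real.exp_nonneg _), mul_assoc] using hmain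

/-- Local parameters for which the approximate posterior centre of the `i`-th coordinate stays away
from the boundary of the box. The condition does not involve `a i`. -/
def goodSet (g : Fin k → Y → ℝ) (D τ : ℝ) (i : Fin k) (y : Fin n → Y) : Set (Fin k → ℝ) :=
  {a | (∀ l, l ≠ i → |a l| ≤ D) ∧ |lin g i a y| ≤ τ}

lemma lin_update (g : Fin k → Y → ℝ) (i : Fin k) (a : Fin k → ℝ) (t : ℝ) (y : Fin n → Y) :
    lin g i (Function.update a i t) y = lin g i a y := by
  simp [lin]

lemma update_mem_goodSet {g : Fin k → Y → ℝ} {D τ : ℝ} {i : Fin k} {y : Fin n → Y}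
    {a : Fin k → ℝ} {t : ℝ} :
    Function.update a i t ∈ goodSet g D τ i y ↔ a ∈ goodSet g D τ i y := by
  simp only [goodSet, Set.mem_ofPred_eq, lin_update]
  refine and_congr_left fun _ => forall_congr' fun l => ?_
  by_cases h : l = i
  · simp [h]
  · simp [Function.update_of_ne h]

lemma measurableSet_good {g : Fin k → Y → ℝ} (hg : ∀ l, Measurable (g l)) (D τ : ℝ) (i : Fin k) :
    MeasurableSet {p : (Fin k → ℝ) × (Fin n → Y) | p.1 ∈ goodSet g D τ i p.2} := by
  refine MeasurableSet.inter ?_ ?_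
  · have : {p : (Fin k → ℝ) × (Fin n → Y) | ∀ l, l ≠ i → |p.1 l| ≤ D} =
        ⋂ l, ⋂ (_ : l ≠ i), {p | |p.1 l| ≤ D} := by ext; simp
    change MeasurableSet {p : (Fin k → ℝ) × (Fin n → Y) | ∀ l, l ≠ i → |p.1 l| ≤ D}
    rw [this]
    refine MeasurableSet.iInter fun l => MeasurableSet.iInter fun _ => ?_
    exact measurableSet_le (measurable_norm.comp ((measurable_pi_apply l).comp measurable_fst))
      measurable_const
  · exact measurableSet_le (measurable_norm.comp (measurable_lin hg i)) measurable_const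

lemma measurable_lik_left (g : Fin k → Y → ℝ) (y : Fin n → Y) :
    Measurable fun a : Fin k → ℝ => lik g a y := by
  unfold lik tilt; fun_prop

lemma measurable_lin_left (g : Fin k → Y → ℝ) (i : Fin k) (y : Fin n → Y) :
    Measurable fun a : Fin k → ℝ => lin g i a y := by
  unfold lin tilt
  have h : Measurable fun a : Fin k → ℝ => Function.update a i 0 := measurable_update_left
  have h' : ∀ l, Measurable fun a : Fin k → ℝ => Function.update a i 0 l := fun l =>
    (measurable_pi_apply l).comp h
  fun_prop

lemma measurableSet_good_left (g : Fin k → Y → ℝ) (D τ : ℝ) (i : Fin k) (y : Fin n → Y) :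
    MeasurableSet (goodSet g D τ i y) := by
  refine MeasurableSet.inter ?_ ?_
  · have : {a : Fin k → ℝ | ∀ l, l ≠ i → |a l| ≤ D} =
        ⋂ l, ⋂ (_ : l ≠ i), {p | |p l| ≤ D} := by ext; simp
    change MeasurableSet {a : Fin k → ℝ | ∀ l, l ≠ i → |a l| ≤ D}
    rw [this]
    refine MeasurableSet.iInter fun l => MeasurableSet.iInter fun _ => ?_
    exact measurableSet_le (measurable_norm.comp (measurable_pi_apply l)) measurable_const
  · exact measurableSet_le (measurable_norm.comp (measurable_lin_left g i y)) measurable_const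

/-- Bayes risk of one coordinate of the distribution, for fixed data `y`: integrate `slice_prior`
over the remaining coordinates of the local parameter. The factor `1 - 1/k` is the dependence of
`a i - mean a` on `a i`. -/
lemma coord_bayes {g : Fin k → Y → ℝ} {G D η R u : ℝ} (hk : 2 ≤ k) (hn : 0 < n)
    (hG0 : 0 ≤ G) (hG : ∀ l y, |g l y| ≤ G) (hδ : k * D * G / √n ≤ 1 / 2)
    (hu : 1 ≤ u) (hη : 0 < η) (hR : 0 ≤ R) (hD : 0 < D) (i : Fin k) (y : Fin n → Y) (e : ℝ) :
    ∫⁻ a, ENNReal.ofReal ((1 - 1 / (k:ℝ)) ^ u *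
        (Real.exp (-(2 * (2 * n * (k * D * G / √n) ^ 3))) * (info g i y + η) ^ (-(u / 2)))) *
        cTrunc u (R * √η) * ((goodSet g D (η * (D - R)) i y).indicator 1 a *
          ENNReal.ofReal (lik g a y)) ∂(Measure.pi fun _ : Fin k => prior1 η D) ≤
      ∫⁻ a, ENNReal.ofReal (lik g a y) *
        ENNReal.ofReal (|e - (a i - (∑ l, a l) / k)| ^ u)
          ∂(Measure.pi fun _ : Fin k => prior1 η D) := by
  have := isProb_prior1 hη hD
  have hk' : (2:ℝ) ≤ k := by exact_mod_cast hk
  have hβ : 0 < 1 - 1 / (k:ℝ) := by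
    rw [sub_pos, div_lt_one (by linarith)]; linarith
  have hlm := (measurable_lik_left g y).ennreal_ofReal
  refine lintegral_le_of_lmarginal_le {i} ?_ ?_ ?_
  · exact ((measurable_one.indicator (measurableSet_good_left g D _ i y)).mul hlm).const_mul _
  · refine hlm.mul (Measurable.ennreal_ofReal ?_)
    have : Measurable fun a : Fin k → ℝ => |e - (a i - (∑ l, a l) / k)| := by fun_prop
    exact this.pow_const u
  · rw [lmarginal_singleton, lmarginal_singleton]
    intro a
    by_cases ha : a ∈ goodSet g D (η * (D - R)) i y
    · simp only [Set.indicator_of_mem (update_mem_goodSet.mpr ha), Pi.one_apply, one_mul]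
      set m := (∑ l, Function.update a i 0 l) / (k:ℝ) with hm
      have hsum : ∀ t, (∑ l, Function.update a i t l) / (k:ℝ) = t / k + m := by
        intro t
        rw [hm, Finset.sum_update_of_mem (Finset.mem_univ i),
          Finset.sum_update_of_mem (Finset.mem_univ i)]
        ring
      have herr : ∀ t, ENNReal.ofReal (|e - (Function.update a i t i -
          (∑ l, Function.update a i t l) / k)| ^ u) =
          ENNReal.ofReal ((1 - 1 / (k:ℝ)) ^ u) *
            ENNReal.ofReal (|(e + m) / (1 - 1 / (k:ℝ)) - t| ^ u) := by
        intro t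
        rw [← ENNReal.ofReal_mul (by positivity), ← Real.mul_rpow hβ.le (abs_nonneg _),
          ← abs_of_pos hβ, ← abs_mul, abs_of_pos hβ, hsum, mul_sub, mul_div_cancel₀ _ hβ.ne']
        congr 3
        simp only [Function.update_self]; ring
      simp only [herr]
      have h := slice_prior hn hG0 hG hδ hu hη hR i a y ha.1 ha.2 ((e + m) / (1 - 1 / (k:ℝ)))
      rw [lintegral_const_mul _ (measurable_lik_update g i a y).ennreal_ofReal,
        ENNReal.ofReal_mul (by positivity), mul_assoc (ENNReal.ofReal _),
        mul_assoc (ENNReal.ofReal _)]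
      have e2 : ∀ t, ENNReal.ofReal (lik g (Function.update a i t) y) *
          (ENNReal.ofReal ((1 - 1 / (k:ℝ)) ^ u) *
            ENNReal.ofReal (|(e + m) / (1 - 1 / (k:ℝ)) - t| ^ u)) =
          ENNReal.ofReal ((1 - 1 / (k:ℝ)) ^ u) * (ENNReal.ofReal (lik g (Function.update a i t) y) *
            ENNReal.ofReal (|(e + m) / (1 - 1 / (k:ℝ)) - t| ^ u)) := fun t => by ring
      simp only [e2]
      rw [lintegral_const_mul]
      · gcongr
      · refine (measurable_lik_update g i a y).ennreal_ofReal.mul (Measurable.ennreal_ofReal ?_)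
        have : Measurable fun t : ℝ => |(e + m) / (1 - 1 / (k:ℝ)) - t| := by fun_prop
        exact this.pow_const u
    · have : ∀ t, Function.update a i t ∉ goodSet g D (η * (D - R)) i y := fun t =>
        fun h => ha (update_mem_goodSet.mp h)
      simp [Set.indicator_of_notMem (this _)]

/-! ### Jensen inequality and change of measure -/

/-- Jensen's inequality for `x ↦ x ^ (-s)`, with the sum constraint as an inequality. -/
lemma sum_rpow_neg {k : ℕ} {B η s : ℝ} (hη : 0 < η) (hB : 0 ≤ B) (hs : 0 ≤ s) (V : Fin k → ℝ)
    (hV : ∀ i, 0 ≤ V i) (hsum : ∑ i, V i ≤ k * B) :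
    k * (B + η) ^ (-s) ≤ ∑ i, (V i + η) ^ (-s) := by
  have hx0 : 0 < B + η := by linarith
  have htan : ∀ i, (B + η) ^ (-s) * (1 - s * ((V i + η) / (B + η) - 1)) ≤ (V i + η) ^ (-s) := by
    intro i
    have hx : 0 < V i + η := by linarith [hV i]
    have hr : 0 < (V i + η) / (B + η) := by positivity
    have h1 : (V i + η) ^ (-s) = (B + η) ^ (-s) * ((V i + η) / (B + η)) ^ (-s) := by
      rw [← Real.mul_rpow hx0.le hr.le, mul_div_cancel₀ _ hx0.ne']
    rw [h1]
    gcongr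
    rw [Real.rpow_def_of_pos hr]
    have h2 := Real.log_le_sub_one_of_pos hr
    have h3 := Real.add_one_le_exp (Real.log ((V i + η) / (B + η)) * -s)
    nlinarith
  refine le_trans ?_ (Finset.sum_le_sum fun i _ => htan i)
  rw [← Finset.mul_sum, Finset.sum_sub_distrib, ← Finset.mul_sum, Finset.sum_sub_distrib,
    ← Finset.sum_div, Finset.sum_add_distrib]
  simp only [Finset.sum_const, Finset.card_univ, Fintype.card_fin, nsmul_eq_mul, mul_one]
  rw [mul_comm (k:ℝ)]
  gcongr
  have : (∑ i, V i + k * η) / (B + η) ≤ k := by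
    rw [div_le_iff₀ hx0]; linarith
  nlinarith

lemma pi_withDensity {μ : Measure Y} [IsProbabilityMeasure μ] {f : Y → ℝ≥0∞} (hf : Measurable f)
    [IsProbabilityMeasure (μ.withDensity f)] :
    (Measure.pi fun _ : Fin n => μ.withDensity f) =
      (Measure.pi fun _ : Fin n => μ).withDensity fun y => ∏ j, f (y j) := by
  refine Measure.pi_eq fun s hs => ?_
  rw [withDensity_apply _ (MeasurableSet.univ_pi hs),
    ← lintegral_indicator (MeasurableSet.univ_pi hs)]
  have h : ∀ y : Fin n → Y, (Set.univ.pi s).indicator (fun y => ∏ j, f (y j)) y =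
      ∏ j, (s j).indicator f (y j) := by
    intro y
    by_cases hy : y ∈ Set.univ.pi s
    · rw [Set.indicator_of_mem hy]
      exact Finset.prod_congr rfl fun j _ => by
        rw [Set.indicator_of_mem (hy j (Set.mem_univ j))]
    · rw [Set.indicator_of_notMem hy]
      simp only [Set.mem_pi, Set.mem_univ, true_implies, not_forall] at hy
      obtain ⟨j, hj⟩ := hy
      exact (Finset.prod_eq_zero (Finset.mem_univ j) (Set.indicator_of_notMem hj _)).symm
  simp only [h]
  have hm : ∀ j, Measurable ((s j).indicator f) := fun j => hf.indicator (hs j)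
  rw [lintegral_prod_eq_prod_lintegral_of_indepFun Finset.univ
    (fun j (y : Fin n → Y) => (s j).indicator f (y j))
    (iIndepFun_pi fun j => (hm j).aemeasurable) fun j => (hm j).comp (measurable_pi_apply j)]
  refine Finset.prod_congr rfl fun j _ => ?_
  rw [withDensity_apply _ (hs j), ← lintegral_indicator (hs j)]
  exact (measurePreserving_eval (fun _ : Fin n => μ) j).lintegral_comp (hm j)

lemma measurable_tilt_right {g : Fin k → Y → ℝ} (hg : ∀ l, Measurable (g l)) (a : Fin k → ℝ) :
    Measurable (tilt g a) := by
  unfold tilt; fun_prop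

lemma integrable_of_bdd {μ : Measure Y} [IsFiniteMeasure μ] {f : Y → ℝ} (hf : Measurable f) {C : ℝ}
    (h : ∀ y, |f y| ≤ C) : Integrable f μ :=
  Integrable.of_bound hf.aestronglyMeasurable C (ae_of_all _ h)

lemma integral_tilt {μ : Measure Y} [IsProbabilityMeasure μ] {g : Fin k → Y → ℝ} {G : ℝ}
    (hg : ∀ l, Measurable (g l)) (hG : ∀ l y, |g l y| ≤ G) (h0 : ∀ l, ∫ y, g l y ∂μ = 0)
    (a : Fin k → ℝ) : ∫ y, tilt g a y ∂μ = 0 := by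
  unfold tilt
  rw [integral_finsetSum _ fun l _ => (integrable_of_bdd (hg l) (hG l)).const_mul _]
  simp [integral_const_mul, h0]

/-- Law of one privatized sample in the local model. -/
noncomputable def locLaw (μ : Measure Y) (g : Fin k → Y → ℝ) (n : ℕ) (a : Fin k → ℝ) : Measure Y :=
  μ.withDensity fun y => ENNReal.ofReal (1 + tilt g a y / √n)

lemma one_add_tilt_nonneg {g : Fin k → Y → ℝ} {a : Fin k → ℝ}
    (h : ∀ y, |tilt g a y| / √n ≤ 1 / 2) (y : Y) : 0 ≤ 1 + tilt g a y / √n := by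
  have h1 := h y
  rw [← abs_of_nonneg (Real.sqrt_nonneg (n:ℝ)), ← abs_div] at h1
  have := (abs_le.mp h1).1
  linarith

lemma isProb_locLaw {μ : Measure Y} [IsProbabilityMeasure μ] {g : Fin k → Y → ℝ} {G : ℝ}
    (hg : ∀ l, Measurable (g l)) (hG : ∀ l y, |g l y| ≤ G) (h0 : ∀ l, ∫ y, g l y ∂μ = 0)
    {a : Fin k → ℝ} (h : ∀ y, |tilt g a y| / √n ≤ 1 / 2) :
    IsProbabilityMeasure (locLaw μ g n a) := by
  constructor
  rw [locLaw, withDensity_apply _ MeasurableSet.univ, setLIntegral_univ]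
  have hi : Integrable (tilt g a) μ :=
    integrable_of_bdd (measurable_tilt_right hg a) (abs_tilt_le hG a)
  have hi' : Integrable (fun y => 1 + tilt g a y / √n) μ :=
    (integrable_const _).add (hi.div_const _)
  rw [← ofReal_integral_eq_lintegral_ofReal hi'
    (ae_of_all _ (one_add_tilt_nonneg h)), integral_add (integrable_const _) (hi.div_const _),
    integral_div, integral_tilt hg hG h0]
  simp

lemma integral_locLaw {μ : Measure Y} [IsProbabilityMeasure μ] {g : Fin k → Y → ℝ}
    (hg : ∀ l, Measurable (g l)) {a : Fin k → ℝ} (h : ∀ y, |tilt g a y| / √n ≤ 1 / 2) (f : Y → ℝ) :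
    ∫ y, f y ∂(locLaw μ g n a) = ∫ y, (1 + tilt g a y / √n) * f y ∂μ := by
  have hm := measurable_tilt_right hg a
  rw [locLaw, integral_withDensity_eq_integral_toReal_smul (by fun_prop)
    (ae_of_all _ fun y => ENNReal.ofReal_lt_top)]
  refine integral_congr_ae (ae_of_all _ fun y => ?_)
  simp only [smul_eq_mul]
  rw [ENNReal.toReal_ofReal (one_add_tilt_nonneg h y)]

/-- `lik g a` is the density of `n` samples of the local model relative to `n` samples of `μ`. -/
lemma lintegral_lik_mul {μ : Measure Y} [IsProbabilityMeasure μ] {g : Fin k → Y → ℝ} {G : ℝ}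
    (hg : ∀ l, Measurable (g l)) (hG : ∀ l y, |g l y| ≤ G) (h0 : ∀ l, ∫ y, g l y ∂μ = 0)
    {a : Fin k → ℝ} (h : ∀ y, |tilt g a y| / √n ≤ 1 / 2) (f : (Fin n → Y) → ℝ≥0∞) :
    ∫⁻ y, ENNReal.ofReal (lik g a y) * f y ∂(Measure.pi fun _ : Fin n => μ) =
      ∫⁻ y, f y ∂(Measure.pi fun _ : Fin n => locLaw μ g n a) := by
  have hm := measurable_tilt_right hg a
  have hm1 : Measurable fun y => ENNReal.ofReal (1 + tilt g a y / √n) := by fun_prop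
  have : IsProbabilityMeasure (μ.withDensity fun y => ENNReal.ofReal (1 + tilt g a y / √n)) :=
    isProb_locLaw hg hG h0 h
  unfold locLaw
  rw [pi_withDensity hm1, lintegral_withDensity_eq_lintegral_mul_non_measurable _ (by fun_prop)
    (ae_of_all _ fun y => ENNReal.prod_lt_top fun j _ => ENNReal.ofReal_lt_top)]
  refine lintegral_congr fun y => ?_
  simp only [Pi.mul_apply]
  rw [lik, ENNReal.ofReal_prod_of_nonneg fun j _ => one_add_tilt_nonneg h (y j)]

/-! ### Probability that the posterior centres are well inside the box -/

/-- Second moment of `lin g i a` under the local law with parameter `a`, bounded uniformly in the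
sample size. -/
lemma lin_moment {μ : Measure Y} [IsProbabilityMeasure μ] {g : Fin k → Y → ℝ} {G : ℝ}
    (hn : 0 < n) (hg : ∀ l, Measurable (g l)) (hG0 : 0 ≤ G) (hG : ∀ l y, |g l y| ≤ G)
    (h0 : ∀ l, ∫ y, g l y ∂μ = 0) {a : Fin k → ℝ} (i : Fin k)
    (ha : ∀ y, |tilt g a y| / √n ≤ 1 / 2)
    (hb : ∀ y, |tilt g (Function.update a i 0) y| / √n ≤ 1 / 2) :
    ∫⁻ y, ENNReal.ofReal (lik g a y) * ENNReal.ofReal (lin g i a y ^ 2)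
        ∂(Measure.pi fun _ : Fin n => μ) ≤
      ENNReal.ofReal (3 * G ^ 2 + 4 * G ^ 4 * (∑ l, |a l|) ^ 2) := by
  have hn' : (0:ℝ) < n := by exact_mod_cast hn
  have hsn : 0 < √(n:ℝ) := Real.sqrt_pos.mpr hn'
  have hsn2 : √(n:ℝ) * √n = n := Real.mul_self_sqrt hn'.le
  have hP := isProb_locLaw hg hG h0 ha
  set ν := locLaw μ g n a with hν
  set S := ∑ l, |a l| with hS
  have hS0 : 0 ≤ S := Finset.sum_nonneg fun l _ => abs_nonneg _
  have hai : |a i| ≤ S := Finset.single_le_sum (f := fun l => |a l|)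
    (fun l _ => abs_nonneg _) (Finset.mem_univ i)
  -- `lin g i a` is a sum of i.i.d. variables `X (y j)` of size `O(1/√n)`.
  set X : Y → ℝ := fun y => g i y / √n * (1 - tilt g (Function.update a i 0) y / √n) with hX
  have hXm : Measurable X := by
    have := measurable_tilt_right hg (Function.update a i 0)
    have := hg i
    fun_prop
  have hlin : ∀ y : Fin n → Y, lin g i a y = ∑ j, X (y j) := by
    intro y
    rw [lin, Finset.sum_div, Finset.sum_div, ← Finset.sum_sub_distrib]
    refine Finset.sum_congr rfl fun j _ => ?_
    simp only [hX]
    generalize √(n:ℝ) = r at hsn hsn2 ⊢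
    rw [← hsn2]; field_simp
  have hXb : ∀ y, |X y| ≤ 3 / 2 * G / √n := by
    intro y
    have h1 : |1 - tilt g (Function.update a i 0) y / √n| ≤ 3 / 2 := by
      have h2 := hb y
      rw [← abs_of_pos hsn, ← abs_div, abs_le] at h2
      rw [abs_le]; constructor <;> linarith [h2.1, h2.2]
    simp only [hX]
    rw [abs_mul, abs_div, abs_of_pos hsn]
    calc |g i y| / √n * |1 - tilt g (Function.update a i 0) y / √n| ≤ G / √n * (3 / 2) := by
          gcongr; exact hG i y
      _ = _ := by ring
  have hXL : MemLp X 2 ν := MemLp.of_bound hXm.aestronglyMeasurable _ (ae_of_all _ hXb)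
  -- The mean of `X` is `O(1/n)`: its leading term vanishes because `g i` integrates to zero.
  have hmean : |n * ∫ y, X y ∂ν| ≤ 2 * G ^ 2 * S := by
    set F : Y → ℝ := fun y => g i y * (a i * g i y -
      tilt g a y * tilt g (Function.update a i 0) y / √n) with hF
    have hFm : Measurable F := by
      have := measurable_tilt_right hg (Function.update a i 0)
      have := measurable_tilt_right hg a
      have := hg i
      fun_prop
    have hFb : ∀ y, |F y| ≤ 2 * G ^ 2 * S := by
      intro y
      have h1 : |a i * g i y - tilt g a y * tilt g (Function.update a i 0) y / √n| ≤
          S * G + G * S * (1 / 2) := by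
        refine (abs_sub _ _).trans (add_le_add ?_ ?_)
        · rw [abs_mul]; gcongr; exact hG i y
        · rw [mul_div_assoc, abs_mul, abs_div, abs_of_pos hsn]
          exact mul_le_mul (abs_tilt_le hG a y) (hb y) (by positivity) (by positivity)
      simp only [hF]
      rw [abs_mul]
      calc |g i y| * _ ≤ G * (S * G + G * S * (1 / 2)) := by gcongr; exact hG i y
        _ ≤ _ := by nlinarith [mul_nonneg (sq_nonneg G) hS0]
    have hFi : Integrable F μ := integrable_of_bdd hFm hFb
    have h1 : n * ∫ y, X y ∂ν = ∫ y, F y ∂μ := by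
      rw [hν, integral_locLaw hg ha, ← integral_const_mul]
      have h2 : ∀ y, n * ((1 + tilt g a y / √n) * X y) = √n * g i y + F y := by
        intro y
        have h3 := tilt_update g a i (a i) y
        rw [Function.update_eq_self] at h3
        simp only [hX, hF]
        rw [h3]
        generalize √(n:ℝ) = r at hsn hsn2 ⊢
        rw [← hsn2]
        field_simp
        ring
      simp only [h2]
      rw [integral_add ((integrable_of_bdd (hg i) (hG i)).const_mul _) hFi, integral_const_mul, h0]
      simp
    rw [h1]
    have := norm_integral_le_of_norm_le_const (μ := μ) (f := F) (ae_of_all _ hFb)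
    simpa using this
  rw [lintegral_lik_mul hg hG h0 ha]
  have hZ : MemLp (∑ j, fun y : Fin n → Y => X (y j)) 2 (Measure.pi fun _ : Fin n => ν) :=
    memLp_finsetSum' _ fun j _ => hXL.comp_measurePreserving
      (measurePreserving_eval (fun _ : Fin n => ν) j)
  have hvar := variance_sum_pi (μ := fun _ : Fin n => ν) (X := fun _ => X) fun _ => hXL
  rw [variance_eq_sub hZ] at hvar
  have hEZ : ∫ y, (∑ j, fun y : Fin n → Y => X (y j)) y ∂(Measure.pi fun _ : Fin n => ν) =
      n * ∫ y, X y ∂ν := by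
    simp only [Finset.sum_apply]
    rw [integral_finsetSum]
    · have : ∀ j, ∫ y : Fin n → Y, X (y j) ∂(Measure.pi fun _ : Fin n => ν) = ∫ y, X y ∂ν :=
        fun j => integral_comp_eval (μ := fun _ : Fin n => ν) (i := j) (f := X)
          hXm.aestronglyMeasurable
      simp [this]
    · intro j _
      exact (hXL.comp_measurePreserving
        (measurePreserving_eval (fun _ : Fin n => ν) j)).integrable one_le_two
  have hv1 : Var[X; ν] ≤ (3 / 2 * G / √n) ^ 2 := by
    refine (variance_le_expectation_sq hXm.aestronglyMeasurable).trans ?_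
    have := norm_integral_le_of_norm_le_const (μ := ν) (f := X ^ 2) (C := (3 / 2 * G / √n) ^ 2)
      (ae_of_all _ fun y => by
        simp only [Pi.pow_apply, norm_pow, Real.norm_eq_abs]
        gcongr; exact hXb y)
    simp only [probReal_univ, mul_one] at this
    exact (le_abs_self _).trans this
  rw [hEZ] at hvar
  have hI : ∫ y, ((∑ j, fun y : Fin n → Y => X (y j)) ^ 2) y ∂(Measure.pi fun _ : Fin n => ν) ≤
      3 * G ^ 2 + 4 * G ^ 4 * S ^ 2 := by
    have h1 : (n * ∫ y, X y ∂ν) ^ 2 ≤ (2 * G ^ 2 * S) ^ 2 := sq_le_sq.mpr (by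
      rwa [abs_of_nonneg (by positivity : 0 ≤ 2 * G ^ 2 * S)])
    have h2 : ∑ _ : Fin n, Var[X; ν] ≤ 3 * G ^ 2 := by
      simp only [Finset.sum_const, Finset.card_univ, Fintype.card_fin, nsmul_eq_mul]
      calc n * Var[X; ν] ≤ n * (3 / 2 * G / √n) ^ 2 := by gcongr
        _ = 9 / 4 * G ^ 2 := by rw [div_pow, sq (√(n:ℝ)), hsn2]; field_simp; ring
        _ ≤ _ := by nlinarith [sq_nonneg G]
    nlinarith
  simp only [hlin]
  have h3 : ∀ y : Fin n → Y, (∑ j, X (y j)) ^ 2 = ((∑ j, fun y : Fin n → Y => X (y j)) ^ 2) y := by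
    intro y; simp
  simp only [h3]
  have hi2 : Integrable ((∑ j, fun y : Fin n → Y => X (y j)) ^ 2)
    (Measure.pi fun _ : Fin n => ν) := hZ.integrable_sq
  rw [← ofReal_integral_eq_lintegral_ofReal hi2 (ae_of_all _ fun y => by
    rw [Pi.pow_apply]; exact sq_nonneg _)]
  exact ENNReal.ofReal_le_ofReal hI

lemma measurable_lik_right {g : Fin k → Y → ℝ} (hg : ∀ l, Measurable (g l)) (a : Fin k → ℝ) :
    Measurable fun y : Fin n → Y => lik g a y := by
  have := measurable_tilt_right hg a
  unfold lik; fun_prop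

lemma measurable_lin_right {g : Fin k → Y → ℝ} (hg : ∀ l, Measurable (g l)) (i : Fin k)
    (a : Fin k → ℝ) : Measurable fun y : Fin n → Y => lin g i a y := by
  have := measurable_tilt_right hg (Function.update a i 0)
  have := hg i
  unfold lin; fun_prop

/-- The pairs (local parameter, data) for which every coordinate is good. -/
def allGood (g : Fin k → Y → ℝ) (D τ : ℝ) (n : ℕ) : Set ((Fin k → ℝ) × (Fin n → Y)) :=
  {p | ∀ i, p.1 ∈ goodSet g D τ i p.2}

lemma measurableSet_allGood {g : Fin k → Y → ℝ} (hg : ∀ l, Measurable (g l)) (D τ : ℝ) :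
    MeasurableSet (allGood g D τ n) := by
  have : allGood g D τ n = ⋂ i, {p | p.1 ∈ goodSet g D τ i p.2} := by ext; simp [allGood]
  rw [this]
  exact MeasurableSet.iInter fun i => measurableSet_good hg D τ i

lemma tilt_div_le {g : Fin k → Y → ℝ} {G D : ℝ} (hG0 : 0 ≤ G) (hG : ∀ l y, |g l y| ≤ G)
    (hδ : k * D * G / √n ≤ 1 / 2) {a : Fin k → ℝ} (ha : ∀ l, |a l| ≤ D) (y : Y) :
    |tilt g a y| / √n ≤ 1 / 2 := by
  refine le_trans ?_ hδ
  gcongr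
  exact abs_tilt_le' hG0 hG ha y

/-- Chebyshev's inequality: under the local law, the data are good with large probability. -/
lemma good_mass {μ : Measure Y} [IsProbabilityMeasure μ] {g : Fin k → Y → ℝ} {G D κ : ℝ}
    (hn : 0 < n) (hg : ∀ l, Measurable (g l)) (hG0 : 0 ≤ G) (hG : ∀ l y, |g l y| ≤ G)
    (h0 : ∀ l, ∫ y, g l y ∂μ = 0) (hδ : k * D * G / √n ≤ 1 / 2) (hκ : 0 < κ) {a : Fin k → ℝ}
    (ha : ∀ l, |a l| ≤ D) :
    1 ≤ ∫⁻ y, ENNReal.ofReal (lik g a y) * (allGood g D κ n).indicator 1 (a, y)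
        ∂(Measure.pi fun _ : Fin n => μ) +
      (ENNReal.ofReal (κ ^ 2))⁻¹ *
        (k * ENNReal.ofReal (3 * G ^ 2 + 4 * G ^ 4 * (∑ l, |a l|) ^ 2)) := by
  have hta := tilt_div_le hG0 hG hδ ha (n := n)
  have htb : ∀ i y, |tilt g (Function.update a i 0) y| / √n ≤ 1 / 2 := fun i =>
    tilt_div_le hG0 hG hδ fun l => by
      by_cases h : l = i
      · subst h; simpa using (abs_nonneg _).trans (ha l)
      · rw [Function.update_of_ne h]; exact ha l
  have hmass : ∫⁻ y, ENNReal.ofReal (lik g a y) ∂(Measure.pi fun _ : Fin n => μ) = 1 := by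
    have h1 := lintegral_lik_mul hg hG h0 hta (fun _ : Fin n → Y => 1)
    have := isProb_locLaw hg hG h0 hta
    simpa using h1
  have hlm := (measurable_lik_right (n := n) hg a).ennreal_ofReal
  have hpt : ∀ y : Fin n → Y, ENNReal.ofReal (lik g a y) ≤
      ENNReal.ofReal (lik g a y) * (allGood g D κ n).indicator 1 (a, y) +
      (ENNReal.ofReal (κ ^ 2))⁻¹ *
        ∑ i, ENNReal.ofReal (lik g a y) * ENNReal.ofReal (lin g i a y ^ 2) := by
    intro y
    by_cases h : (a, y) ∈ allGood g D κ n
    · rw [Set.indicator_of_mem h]; simp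
    · have h' : ∃ i, κ < |lin g i a y| := by
        by_contra! hc
        exact h fun i => ⟨fun l _ => ha l, hc i⟩
      obtain ⟨i, hi⟩ := h'
      refine le_add_left ?_
      have h1 : ENNReal.ofReal (lik g a y) * ENNReal.ofReal (κ ^ 2) ≤
          ∑ i, ENNReal.ofReal (lik g a y) * ENNReal.ofReal (lin g i a y ^ 2) := by
        refine le_trans ?_ (Finset.single_le_sum (f := fun i =>
          ENNReal.ofReal (lik g a y) * ENNReal.ofReal (lin g i a y ^ 2))
          (fun _ _ => zero_le) (Finset.mem_univ i))
        gcongr 1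
        refine ENNReal.ofReal_le_ofReal ?_
        rw [← sq_abs (lin g i a y)]
        gcongr
      have hκ2 : ENNReal.ofReal (κ ^ 2) ≠ 0 := by simp; positivity
      calc ENNReal.ofReal (lik g a y) = (ENNReal.ofReal (κ ^ 2))⁻¹ *
            (ENNReal.ofReal (lik g a y) * ENNReal.ofReal (κ ^ 2)) := by
            rw [mul_comm (ENNReal.ofReal (lik g a y)), ← mul_assoc,
              ENNReal.inv_mul_cancel hκ2 ENNReal.ofReal_ne_top, one_mul]
        _ ≤ _ := by gcongr
  rw [← hmass]
  refine (lintegral_mono hpt).trans ?_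
  have hgm : Measurable fun y : Fin n → Y => (allGood g D κ n).indicator (1 : (Fin k → ℝ) × (Fin n → Y) → ℝ≥0∞) (a, y) :=
    (measurable_one.indicator (measurableSet_allGood hg D κ)).comp measurable_prodMk_left
  have hqm : ∀ i, Measurable fun y : Fin n → Y =>
      ENNReal.ofReal (lik g a y) * ENNReal.ofReal (lin g i a y ^ 2) := fun i =>
    hlm.mul ((measurable_lin_right hg i a).pow_const 2).ennreal_ofReal
  have hlg : Measurable fun y : Fin n → Y =>
      ENNReal.ofReal (lik g a y) * (allGood g D κ n).indicator 1 (a, y) := hlm.mul hgm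
  rw [lintegral_add_left hlg]
  gcongr
  rw [lintegral_const_mul _ (Finset.measurable_sum _ fun i _ => hqm i),
    lintegral_finsetSum _ fun i _ => hqm i]
  gcongr
  refine (Finset.sum_le_sum fun i _ => lin_moment hn hg hG0 hG h0 i hta (htb i)).trans ?_
  simp

/-! ### The Bayesian bound -/

/-- Bayesian lower bound for a fixed sample size. The number `r` bounds the risk of `est` over the
local model; `C` bounds the prior mean of the second moments of `lin`. -/
lemma core_bound {μ : Measure Y} [IsProbabilityMeasure μ] {g : Fin k → Y → ℝ} {G D η R u B : ℝ}
    {C r : ℝ≥0∞} (hk : 2 ≤ k) (hn : 0 < n) (hg : ∀ l, Measurable (g l)) (hG0 : 0 ≤ G)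
    (hG : ∀ l y, |g l y| ≤ G) (h0 : ∀ l, ∫ y, g l y ∂μ = 0) (hB : 0 ≤ B)
    (hE : ∀ y, ∑ i, g i y ^ 2 ≤ k * B) (hδ : k * D * G / √n ≤ 1 / 2) (hu : 1 ≤ u) (hη : 0 < η)
    (hR : 0 ≤ R) (hRD : R < D)
    (hC : ∫⁻ a, ENNReal.ofReal (3 * G ^ 2 + 4 * G ^ 4 * (∑ l, |a l|) ^ 2)
      ∂(Measure.pi fun _ : Fin k => prior1 η D) ≤ C)
    (est : (Fin n → Y) → Fin k → ℝ) (hest : Measurable est)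
    (hr : ∀ a : Fin k → ℝ, (∀ l, |a l| ≤ D) →
      ∫⁻ y, ENNReal.ofReal (lik g a y) * ENNReal.ofReal
        (∑ i, |est y i - (1 / k + (a i - (∑ l, a l) / k) / √n)| ^ u)
        ∂(Measure.pi fun _ : Fin n => μ) ≤ r) :
    ENNReal.ofReal ((1 - 1 / (k:ℝ)) ^ u * (Real.exp (-(2 * (2 * n * (k * D * G / √n) ^ 3))) *
        (k * (B + η) ^ (-(u / 2))))) * cTrunc u (R * √η) *
        (1 - (ENNReal.ofReal ((η * (D - R)) ^ 2))⁻¹ * (k * C)) ≤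
      ENNReal.ofReal (√n ^ u) * r := by
  have hD : 0 < D := hR.trans_lt hRD
  have hP1 := isProb_prior1 hη hD
  have hn' : (0:ℝ) < n := by exact_mod_cast hn
  have hsn : 0 < √(n:ℝ) := Real.sqrt_pos.mpr hn'
  have hk' : (2:ℝ) ≤ k := by exact_mod_cast hk
  have hβ : 0 < 1 - 1 / (k:ℝ) := by
    rw [sub_pos, div_lt_one (by linarith)]; linarith
  set κ := η * (D - R) with hκdef
  have hκ : 0 < κ := mul_pos hη (by linarith)
  set P := Measure.pi fun _ : Fin n => μ with hP
  set ϖ := Measure.pi fun _ : Fin k => prior1 η D with hϖ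
  set E := Real.exp (-(2 * (2 * n * (k * D * G / √n) ^ 3))) with hEdef
  set e : (Fin n → Y) → Fin k → ℝ := fun y i => √n * (est y i - 1 / k) with he
  have hbox : ∀ᵐ a ∂ϖ, ∀ l, |a l| ≤ D := by
    rw [hϖ]
    exact ae_all_iff.mpr fun l => (Measure.quasiMeasurePreserving_eval
      (fun _ : Fin k => prior1 η D) l).ae (ae_prior1 η D)
  have hlik : Measurable fun p : (Fin k → ℝ) × (Fin n → Y) => ENNReal.ofReal (lik g p.1 p.2) :=
    (measurable_lik hg).ennreal_ofReal
  have hGI : Measurable ((allGood g D κ n).indicator (1 : (Fin k → ℝ) × (Fin n → Y) → ℝ≥0∞)) :=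
    measurable_one.indicator (measurableSet_allGood hg D κ)
  have hj : Measurable fun p : (Fin k → ℝ) × (Fin n → Y) =>
      ENNReal.ofReal (lik g p.1 p.2) * (allGood g D κ n).indicator 1 (p.1, p.2) := hlik.mul hGI
  have hj1 : Measurable fun a : Fin k → ℝ => ∫⁻ y,
      ENNReal.ofReal (lik g a y) * (allGood g D κ n).indicator 1 (a, y) ∂P :=
    hj.lintegral_prod_right'
  have hj2 : Measurable fun y : Fin n → Y => ∫⁻ a,
      ENNReal.ofReal (lik g a y) * (allGood g D κ n).indicator 1 (a, y) ∂ϖ :=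
    hj.lintegral_prod_left'
  have hj3 : ∀ y : Fin n → Y, Measurable fun a : Fin k → ℝ =>
      ENNReal.ofReal (lik g a y) * (allGood g D κ n).indicator 1 (a, y) := fun y => by
    have h := hj.comp (measurable_prodMk_right (y := y))
    exact h
  -- The event that all coordinates are good has large mass under prior times likelihood.
  have hgood : 1 - (ENNReal.ofReal (κ ^ 2))⁻¹ * (k * C) ≤
      ∫⁻ a, ∫⁻ y, ENNReal.ofReal (lik g a y) * (allGood g D κ n).indicator 1 (a, y) ∂P ∂ϖ := by
    rw [tsub_le_iff_right]
    calc (1 : ℝ≥0∞) = ∫⁻ _, 1 ∂ϖ := by simp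
      _ ≤ ∫⁻ a, (∫⁻ y, ENNReal.ofReal (lik g a y) * (allGood g D κ n).indicator 1 (a, y) ∂P +
          (ENNReal.ofReal (κ ^ 2))⁻¹ *
            (k * ENNReal.ofReal (3 * G ^ 2 + 4 * G ^ 4 * (∑ l, |a l|) ^ 2))) ∂ϖ := by
          refine lintegral_mono_ae ?_
          filter_upwards [hbox] with a ha
          exact good_mass hn hg hG0 hG h0 hδ hκ ha
      _ ≤ _ := by
          rw [lintegral_add_left hj1, lintegral_const_mul _ (by fun_prop),
            lintegral_const_mul _ (by fun_prop)]
          gcongr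
  have hloss : ∀ (a : Fin k → ℝ) (y : Fin n → Y), ENNReal.ofReal (√n ^ u) * ENNReal.ofReal
      (∑ i, |est y i - (1 / k + (a i - (∑ l, a l) / k) / √n)| ^ u) =
      ∑ i, ENNReal.ofReal (|e y i - (a i - (∑ l, a l) / k)| ^ u) := by
    intro a y
    rw [← ENNReal.ofReal_mul (by positivity), Finset.mul_sum,
      ENNReal.ofReal_sum_of_nonneg fun i _ => by positivity]
    refine Finset.sum_congr rfl fun i _ => ?_
    rw [← Real.mul_rpow hsn.le (abs_nonneg _), ← abs_of_pos hsn, ← abs_mul, abs_of_pos hsn]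
    congr 3
    simp only [he]
    field_simp
    ring
  have hem : Measurable e := by
    refine measurable_pi_lambda _ fun i => ?_
    exact (((measurable_pi_apply i).comp hest).sub_const _).const_mul _
  have hLm : ∀ i, Measurable fun p : (Fin k → ℝ) × (Fin n → Y) =>
      ENNReal.ofReal (lik g p.1 p.2) *
        ENNReal.ofReal (|e p.2 i - (p.1 i - (∑ l, p.1 l) / k)| ^ u) := by
    intro i
    refine hlik.mul (Measurable.ennreal_ofReal ?_)
    have h1 : Measurable fun p : (Fin k → ℝ) × (Fin n → Y) => e p.2 i :=
      (measurable_pi_apply i).comp (hem.comp measurable_snd)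
    have h2 : Measurable fun p : (Fin k → ℝ) × (Fin n → Y) =>
        |e p.2 i - (p.1 i - (∑ l, p.1 l) / k)| := by fun_prop
    exact h2.pow_const u
  set c : (Fin n → Y) → Fin k → ℝ := fun y i =>
    (1 - 1 / (k:ℝ)) ^ u * (E * (info g i y + η) ^ (-(u / 2))) with hc
  have hc0 : ∀ y i, 0 ≤ c y i := fun y i => by
    have := info_nonneg g i y
    simp only [hc]; positivity
  have hcsum : ∀ y, (1 - 1 / (k:ℝ)) ^ u * (E * (k * (B + η) ^ (-(u / 2)))) ≤ ∑ i, c y i := by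
    intro y
    simp only [hc, ← Finset.mul_sum]
    gcongr
    refine sum_rpow_neg hη hB (by linarith) _ (fun i => info_nonneg g i y) ?_
    simp only [info]
    rw [← Finset.sum_div, Finset.sum_comm, div_le_iff₀ hn']
    calc ∑ j, ∑ i, g i (y j) ^ 2 ≤ ∑ _ : Fin n, k * B := Finset.sum_le_sum fun j _ => hE (y j)
      _ = _ := by simp; ring
  calc _ ≤ ENNReal.ofReal ((1 - 1 / (k:ℝ)) ^ u * (E * (k * (B + η) ^ (-(u / 2))))) *
          cTrunc u (R * √η) * ∫⁻ a, ∫⁻ y, ENNReal.ofReal (lik g a y) *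
            (allGood g D κ n).indicator 1 (a, y) ∂P ∂ϖ := by gcongr
    _ = ENNReal.ofReal ((1 - 1 / (k:ℝ)) ^ u * (E * (k * (B + η) ^ (-(u / 2))))) *
          cTrunc u (R * √η) * ∫⁻ y, ∫⁻ a, ENNReal.ofReal (lik g a y) *
            (allGood g D κ n).indicator 1 (a, y) ∂ϖ ∂P := by
        rw [lintegral_lintegral_swap hj.aemeasurable]
    _ = ∫⁻ y, ∫⁻ a, ENNReal.ofReal ((1 - 1 / (k:ℝ)) ^ u * (E * (k * (B + η) ^ (-(u / 2))))) *
          cTrunc u (R * √η) * (ENNReal.ofReal (lik g a y) *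
            (allGood g D κ n).indicator 1 (a, y)) ∂ϖ ∂P := by
        rw [← lintegral_const_mul _ hj2]
        refine lintegral_congr fun y => ?_
        rw [lintegral_const_mul _ (hj3 y)]
    _ ≤ ∫⁻ y, ∫⁻ a, ∑ i, ENNReal.ofReal (c y i) * cTrunc u (R * √η) *
          ((goodSet g D κ i y).indicator 1 a * ENNReal.ofReal (lik g a y)) ∂ϖ ∂P := by
        refine lintegral_mono fun y => lintegral_mono fun a => ?_
        by_cases h : (a, y) ∈ allGood g D κ n
        · have h' : ∀ i, a ∈ goodSet g D κ i y := h
          simp only [Set.indicator_of_mem h, Set.indicator_of_mem (h' _), Pi.one_apply, one_mul,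
            mul_one]
          rw [← Finset.sum_mul, ← Finset.sum_mul,
            ← ENNReal.ofReal_sum_of_nonneg fun i _ => hc0 y i]
          gcongr
          exact hcsum y
        · simp [Set.indicator_of_notMem h]
    _ = ∫⁻ y, ∑ i, ∫⁻ a, ENNReal.ofReal (c y i) * cTrunc u (R * √η) *
          ((goodSet g D κ i y).indicator 1 a * ENNReal.ofReal (lik g a y)) ∂ϖ ∂P := by
        refine lintegral_congr fun y => lintegral_finsetSum _ fun i _ => ?_
        exact ((measurable_one.indicator (measurableSet_good_left g D κ i y)).mul
          (measurable_lik_left g y).ennreal_ofReal).const_mul _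
    _ ≤ ∫⁻ y, ∑ i, ∫⁻ a, ENNReal.ofReal (lik g a y) *
          ENNReal.ofReal (|e y i - (a i - (∑ l, a l) / k)| ^ u) ∂ϖ ∂P := by
        refine lintegral_mono fun y => Finset.sum_le_sum fun i _ => ?_
        exact coord_bayes hk hn hG0 hG hδ hu hη hR hD i y (e y i)
    _ = ∫⁻ y, ∫⁻ a, ∑ i, ENNReal.ofReal (lik g a y) *
          ENNReal.ofReal (|e y i - (a i - (∑ l, a l) / k)| ^ u) ∂ϖ ∂P := by
        refine lintegral_congr fun y => (lintegral_finsetSum _ fun i _ => ?_).symm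
        have h := (hLm i).comp (measurable_prodMk_right (y := y))
        exact h
    _ = ∫⁻ a, ∫⁻ y, ∑ i, ENNReal.ofReal (lik g a y) *
          ENNReal.ofReal (|e y i - (a i - (∑ l, a l) / k)| ^ u) ∂P ∂ϖ := by
        symm
        rw [lintegral_lintegral_swap]
        exact (Finset.measurable_sum _ fun i _ => hLm i).aemeasurable
    _ ≤ ∫⁻ _, ENNReal.ofReal (√n ^ u) * r ∂ϖ := by
        refine lintegral_mono_ae ?_
        filter_upwards [hbox] with a ha
        refine le_trans (le_of_eq ?_) (mul_le_mul_right (hr a ha) _)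
        rw [← lintegral_const_mul' _ _ ENNReal.ofReal_ne_top]
        refine lintegral_congr fun y => ?_
        rw [mul_left_comm, hloss, Finset.mul_sum]
    _ = _ := by simp

/-! ### Reduction of a private mechanism to the local model -/

/-- A private mechanism has densities with respect to its law under the uniform distribution; they
can be chosen to satisfy the privacy constraint everywhere. -/
lemma exists_density (hk : 0 < k) {ε : ℝ} (hε : 0 < ε) {Q : Kernel (Fin k) Y}
    (hQ : IsPrivate ε Q) :
    ∃ (μ : Measure Y) (f : Fin k → Y → ℝ), IsProbabilityMeasure μ ∧ (∀ i, Measurable (f i)) ∧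
      (∀ i y, 0 ≤ f i y) ∧ (∀ i j y, f i y ≤ Real.exp ε * f j y) ∧ (∀ y, ∑ i, f i y = k) ∧
      ∀ i, Q i = μ.withDensity fun y => ENNReal.ofReal (f i y) := by
  have hM := hQ.1
  have hk0 : (k : ℝ≥0∞) ≠ 0 := by exact_mod_cast hk.ne'
  have hkt : (k : ℝ≥0∞) ≠ ∞ := ENNReal.natCast_ne_top k
  set μ : Measure Y := (k : ℝ≥0∞)⁻¹ • ∑ i, Q i with hμ
  have hkμ : (k : ℝ≥0∞) • μ = ∑ i, Q i := by
    rw [hμ, smul_smul, ENNReal.mul_inv_cancel hk0 hkt, one_smul]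
  have hprob : IsProbabilityMeasure μ := by
    constructor
    rw [hμ, Measure.smul_apply, Measure.finsetSum_apply]
    simp [ENNReal.inv_mul_cancel hk0 hkt]
  have hac : ∀ i, Q i ≪ μ := by
    intro i
    refine Measure.AbsolutelyContinuous.mk fun s _ hs => ?_
    have h1 : (∑ i, Q i) s = 0 := by rw [← hkμ, Measure.smul_apply, hs]; simp
    rw [Measure.finsetSum_apply] at h1
    exact (Finset.sum_eq_zero_iff.mp h1) i (Finset.mem_univ i)
  set h : Fin k → Y → ℝ≥0∞ := fun i => (Q i).rnDeriv μ with hh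
  have hhm : ∀ i, Measurable (h i) := fun i => Measure.measurable_rnDeriv _ _
  have hd : ∀ i, μ.withDensity (h i) = Q i := fun i => Measure.withDensity_rnDeriv_eq _ _ (hac i)
  have hle : ∀ i j, h i ≤ᵐ[μ] fun y => ENNReal.ofReal (Real.exp ε) * h j y := by
    intro i j
    refine ae_le_of_forall_setLIntegral_le_of_sigmaFinite (hhm i) fun s hs _ => ?_
    rw [lintegral_const_mul _ (hhm j), ← withDensity_apply _ hs, ← withDensity_apply _ hs, hd, hd]
    exact hQ.2 s hs i j
  have hsum : (fun y => ∑ i, h i y) =ᵐ[μ] fun _ => (k : ℝ≥0∞) := by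
    have hsm : Measurable fun y => ∑ i, h i y := Finset.measurable_sum _ fun i _ => hhm i
    refine ae_eq_of_forall_setLIntegral_eq_of_sigmaFinite hsm measurable_const fun s hs _ => ?_
    rw [lintegral_finsetSum _ fun i _ => hhm i, setLIntegral_const, ← smul_eq_mul,
      ← Measure.smul_apply, hkμ, Measure.finsetSum_apply]
    exact Finset.sum_congr rfl fun i _ => by rw [← withDensity_apply _ hs, hd]
  set S : Set Y := {y | (∀ i j, h i y ≤ ENNReal.ofReal (Real.exp ε) * h j y) ∧
    ∑ i, h i y = k} with hS
  have hSm : MeasurableSet S := by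
    have : S = (⋂ i, ⋂ j, {y | h i y ≤ ENNReal.ofReal (Real.exp ε) * h j y}) ∩
        {y | ∑ i, h i y = k} := by ext; simp [hS]
    rw [this]
    refine MeasurableSet.inter (MeasurableSet.iInter fun i => MeasurableSet.iInter fun j =>
      measurableSet_le (hhm i) ((hhm j).const_mul _)) ?_
    exact measurableSet_eq_fun (Finset.measurable_sum _ fun i _ => hhm i) measurable_const
  have hSae : ∀ᵐ y ∂μ, y ∈ S := by
    have h1 : ∀ᵐ y ∂μ, ∀ i j, h i y ≤ ENNReal.ofReal (Real.exp ε) * h j y :=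
      ae_all_iff.mpr fun i => ae_all_iff.mpr fun j => hle i j
    filter_upwards [h1, hsum] with y h1 h2 using ⟨h1, h2⟩
  have hfin : ∀ y ∈ S, ∀ i, h i y ≠ ∞ := fun y hy i => by
    refine ne_top_of_le_ne_top hkt ?_
    rw [← hy.2]
    exact Finset.single_le_sum (f := fun i => h i y) (fun _ _ => zero_le) (Finset.mem_univ i)
  classical
  refine ⟨μ, fun i => S.piecewise (fun y => (h i y).toReal) 1, hprob, fun i => ?_, fun i y => ?_,
    fun i j y => ?_, fun y => ?_, fun i => ?_⟩
  · exact Measurable.piecewise hSm (hhm i).ennreal_toReal measurable_one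
  · by_cases hy : y ∈ S <;> simp [Set.piecewise, hy]
  · by_cases hy : y ∈ S
    · simp only [Set.piecewise, hy, if_true]
      have h1 := ENNReal.toReal_mono (ENNReal.mul_ne_top ENNReal.ofReal_ne_top (hfin y hy j))
        (hy.1 i j)
      rwa [ENNReal.toReal_mul, ENNReal.toReal_ofReal (Real.exp_nonneg _)] at h1
    · simp [Set.piecewise, hy, hε.le]
  · by_cases hy : y ∈ S
    · simp only [Set.piecewise, hy, if_true]
      rw [← ENNReal.toReal_sum fun i _ => hfin y hy i, hy.2, ENNReal.toReal_natCast]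
    · simp [Set.piecewise, hy]
  · rw [← hd i]
    refine withDensity_congr_ae ?_
    filter_upwards [hSae] with y hy
    simp only [Set.piecewise, hy, if_true]
    rw [ENNReal.ofReal_toReal (hfin y hy i)]

/-- In the local model the privatized law has density `1 + tilt g a / √n`. -/
lemma marginal_local {μ : Measure Y} {f : Fin k → Y → ℝ} {Q : Kernel (Fin k) Y} (hk : 0 < k)
    (hf : ∀ i, Measurable (f i)) (hf0 : ∀ i y, 0 ≤ f i y) (hsum : ∀ y, ∑ i, f i y = k)
    (hQ : ∀ i, Q i = μ.withDensity fun y => ENNReal.ofReal (f i y)) (a : Fin k → ℝ)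
    (hp : ∀ i, 0 ≤ 1 / (k:ℝ) + (a i - (∑ l, a l) / k) / √n) :
    marginal Q (fun i => 1 / (k:ℝ) + (a i - (∑ l, a l) / k) / √n) =
      locLaw μ (fun i y => f i y - 1) n a := by
  have hk0 : (k:ℝ) ≠ 0 := by exact_mod_cast hk.ne'
  ext s hs
  rw [marginal, locLaw, withDensity_apply _ hs, Measure.finsetSum_apply]
  have h1 : ∀ i, (ENNReal.ofReal (1 / (k:ℝ) + (a i - (∑ l, a l) / k) / √n) • Q i) s =
      ∫⁻ y in s, ENNReal.ofReal ((1 / (k:ℝ) + (a i - (∑ l, a l) / k) / √n) * f i y) ∂μ := by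
    intro i
    rw [Measure.smul_apply, hQ, withDensity_apply _ hs, smul_eq_mul,
      ← lintegral_const_mul _ (hf i).ennreal_ofReal]
    exact lintegral_congr fun y => (ENNReal.ofReal_mul (hp i)).symm
  rw [Finset.sum_congr rfl fun i _ => h1 i, ← lintegral_finsetSum _ fun i _ => by
    have := hf i; fun_prop]
  refine lintegral_congr fun y => ?_
  rw [← ENNReal.ofReal_sum_of_nonneg fun i _ => mul_nonneg (hp i) (hf0 i y)]
  congr 1
  simp only [tilt, add_mul, mul_sub, mul_one, sub_div, sub_mul]
  rw [Finset.sum_add_distrib, Finset.sum_sub_distrib, Finset.sum_sub_distrib, ← Finset.mul_sum,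
    ← Finset.mul_sum, hsum]
  have h2 : ∑ i, a i / √n * f i y = (∑ i, a i * f i y) / √n := by
    rw [Finset.sum_div]; exact Finset.sum_congr rfl fun i _ => by ring
  rw [h2]
  field_simp

lemma local_mem_simplex {D : ℝ} (hk : 0 < k) {a : Fin k → ℝ} (ha : ∀ l, |a l| ≤ D)
    (hD : k * (2 * D) ≤ √n) (hn : 0 < n) :
    (fun i => 1 / (k:ℝ) + (a i - (∑ l, a l) / k) / √n) ∈ simplex k := by
  have hk0 : (0:ℝ) < k := by exact_mod_cast hk
  have hsn : 0 < √(n:ℝ) := Real.sqrt_pos.mpr (by exact_mod_cast hn)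
  constructor
  · intro i
    have h1 : |(∑ l, a l) / k| ≤ D := by
      rw [abs_div, abs_of_pos hk0, div_le_iff₀ hk0]
      refine (Finset.abs_sum_le_sum_abs _ _).trans ((Finset.sum_le_sum fun l _ => ha l).trans ?_)
      simp [mul_comm]
    have h2 : -(2 * D) ≤ a i - (∑ l, a l) / k := by
      have := (abs_le.mp (ha i)).1
      have := (abs_le.mp h1).2
      linarith
    have h3 : -(1 / (k:ℝ)) ≤ (a i - (∑ l, a l) / k) / √n := by
      rw [le_div_iff₀ hsn]
      refine le_trans ?_ h2
      rw [neg_mul, neg_le_neg_iff, one_div, inv_mul_eq_div, le_div_iff₀ hk0]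
      linarith
    simp only
    linarith
  · simp only
    rw [Finset.sum_add_distrib, ← Finset.sum_div (f := fun i => a i - (∑ l, a l) / k),
      Finset.sum_sub_distrib]
    simp only [Finset.sum_const, Finset.card_univ, Fintype.card_fin, nsmul_eq_mul]
    field_simp
    simp

lemma gfun_dstar_pos {ε : ℝ} (hε : 0 < ε) {dstar : ℕ} (hd : IsOptDstar k ε dstar) :
    0 < gfun ε k dstar := by
  have h := Finset.mem_Icc.mp hd.1
  have h1 : (1:ℝ) ≤ dstar := by exact_mod_cast h.1
  have h2 : (dstar:ℝ) + 1 ≤ k := by exact_mod_cast (by omega : dstar + 1 ≤ k)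
  have h3 : 1 < Real.exp ε := Real.one_lt_exp_iff.mpr hε
  have h4 : 0 < dstar * Real.exp ε + k - dstar := by nlinarith
  have h5 : 0 < (k:ℝ) - dstar := by linarith
  unfold gfun
  positivity

/-- Under the product prior the quantity controlling the probability that some coordinate posterior
is centred near the boundary is bounded uniformly in the truncation `D`. -/
lemma exists_prior_bound (k : ℕ) {η : ℝ} (hη : 0 < η) (G : ℝ) :
    ∃ C : ℝ≥0∞, C ≠ ∞ ∧ ∀ D : ℝ, 1 ≤ D →
      ∫⁻ a, ENNReal.ofReal (3 * G ^ 2 + 4 * G ^ 4 * (∑ l, |a l|) ^ 2)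
        ∂(Measure.pi fun _ : Fin k => prior1 η D) ≤ C := by
  obtain ⟨A, hA, hAD⟩ := prior1_moment hη
  refine ⟨ENNReal.ofReal (3 * G ^ 2) + ENNReal.ofReal (4 * G ^ 4 * k) * (k * A), ?_, fun D hD => ?_⟩
  · exact ENNReal.add_ne_top.mpr ⟨ENNReal.ofReal_ne_top, ENNReal.mul_ne_top ENNReal.ofReal_ne_top
      (ENNReal.mul_ne_top (ENNReal.natCast_ne_top k) hA)⟩
  have hP := isProb_prior1 (D := D) hη (by linarith)
  have hpt : ∀ a : Fin k → ℝ, ENNReal.ofReal (3 * G ^ 2 + 4 * G ^ 4 * (∑ l, |a l|) ^ 2) ≤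
      ENNReal.ofReal (3 * G ^ 2) +
        ENNReal.ofReal (4 * G ^ 4 * k) * ∑ l, ENNReal.ofReal (a l ^ 2) := by
    intro a
    rw [← ENNReal.ofReal_sum_of_nonneg fun l _ => sq_nonneg (a l),
      ← ENNReal.ofReal_mul (by positivity), ← ENNReal.ofReal_add (by positivity)
        (mul_nonneg (by positivity) (Finset.sum_nonneg fun l _ => sq_nonneg (a l)))]
    refine ENNReal.ofReal_le_ofReal ?_
    have h1 := sq_sum_le_card_mul_sum_sq (s := Finset.univ) (f := fun l => |a l|)
    simp only [sq_abs, Finset.card_univ, Fintype.card_fin] at h1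
    have h2 : 0 ≤ 4 * G ^ 4 := by positivity
    nlinarith [mul_le_mul_of_nonneg_left h1 h2]
  refine (lintegral_mono hpt).trans ?_
  have hm : ∀ l : Fin k, Measurable fun a : Fin k → ℝ => ENNReal.ofReal (a l ^ 2) := fun l => by
    fun_prop
  rw [lintegral_add_left measurable_const, lintegral_const, measure_univ, mul_one,
    lintegral_const_mul _ (Finset.measurable_sum _ fun l _ => hm l),
    lintegral_finsetSum _ fun l _ => hm l]
  gcongr
  calc ∑ l : Fin k, ∫⁻ a, ENNReal.ofReal (a l ^ 2) ∂(Measure.pi fun _ : Fin k => prior1 η D)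
      ≤ ∑ _l : Fin k, A := by
        refine Finset.sum_le_sum fun l _ => ?_
        have hmp := measurePreserving_eval (fun _ : Fin k => prior1 η D) l
        have hsq : Measurable fun t : ℝ => ENNReal.ofReal (t ^ 2) := by fun_prop
        have := hmp.lintegral_comp hsq
        simp only [Function.eval] at this
        rw [this]
        exact hAD D hD
    _ = k * A := by simp

/-- Finite-sample lower bound for the minimax risk of a private mechanism. -/
lemma minimax_bound {ε u : ℝ} (hk : 2 ≤ k) (hε : 0 < ε) (hu : 1 ≤ u) {dstar : ℕ}
    (hd : IsOptDstar k ε dstar) {Q : Kernel (Fin k) Y} (hQ : IsPrivate ε Q) {η : ℝ} (hη : 0 < η) :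
    ∃ C : ℝ≥0∞, C ≠ ∞ ∧ ∀ (D R : ℝ) (n : ℕ), 1 ≤ D → 0 ≤ R → R < D → 0 < n →
      k * D * Real.exp ε / √n ≤ 1 / 2 →
      ENNReal.ofReal ((1 - 1 / (k:ℝ)) ^ u *
          (Real.exp (-(2 * (2 * n * (k * D * Real.exp ε / √n) ^ 3))) *
            (k * ((Real.exp ε - 1) ^ 2 / gfun ε k dstar + η) ^ (-(u / 2))))) * cTrunc u (R * √η) *
          (1 - (ENNReal.ofReal ((η * (D - R)) ^ 2))⁻¹ * (k * C)) ≤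
        ENNReal.ofReal (√n ^ u) * _root_.minimaxRisk k n u Q := by
  have hk0 : 0 < k := by omega
  have hkR : (0:ℝ) < k := by exact_mod_cast hk0
  obtain ⟨μ, f, hμ, hf, hf0, hfr, hfs, hQf⟩ := exists_density hk0 hε hQ
  obtain ⟨C, hC, hCD⟩ := exists_prior_bound k hη (Real.exp ε)
  have hE : 1 < Real.exp ε := Real.one_lt_exp_iff.mpr hε
  refine ⟨C, hC, fun D R n hD hR hRD hn hδ => ?_⟩
  have hsn : 0 < √(n:ℝ) := Real.sqrt_pos.mpr (by exact_mod_cast hn)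
  set g : Fin k → Y → ℝ := fun i y => f i y - 1 with hgdef
  have hg : ∀ l, Measurable (g l) := fun l => (hf l).sub_const 1
  have hfE : ∀ i y, f i y ≤ Real.exp ε := by
    intro i y
    have h1 : ∑ _j : Fin k, f i y ≤ ∑ j, Real.exp ε * f j y :=
      Finset.sum_le_sum fun j _ => hfr i j y
    rw [← Finset.mul_sum, hfs] at h1
    simp only [Finset.sum_const, Finset.card_univ, Fintype.card_fin, nsmul_eq_mul] at h1
    nlinarith
  have hG : ∀ l y, |g l y| ≤ Real.exp ε := fun l y => by
    rw [abs_le]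
    constructor <;> simp only [hgdef] <;> linarith [hf0 l y, hfE l y]
  have h0 : ∀ l, ∫ y, g l y ∂μ = 0 := by
    intro l
    have hi : Integrable (f l) μ := integrable_of_bdd (hf l) (C := Real.exp ε) fun y => by
      rw [abs_of_nonneg (hf0 l y)]; exact hfE l y
    have hM := hQ.1
    have h1 : Q l Set.univ = 1 := measure_univ
    rw [hQf l, withDensity_apply _ MeasurableSet.univ, setLIntegral_univ,
      ← ofReal_integral_eq_lintegral_ofReal hi (ae_of_all _ (hf0 l))] at h1
    have h2 : ∫ y, f l y ∂μ = 1 := by simpa using h1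
    simp only [hgdef]
    rw [integral_sub hi (integrable_const _), h2]
    simp
  have hgp := gfun_dstar_pos hε hd
  have hB : 0 ≤ (Real.exp ε - 1) ^ 2 / gfun ε k dstar := by positivity
  have hEn : ∀ y, ∑ i, g i y ^ 2 ≤ k * ((Real.exp ε - 1) ^ 2 / gfun ε k dstar) := fun y =>
    energy_le hk hε hd (fun i => f i y) (fun i => hf0 i y) (fun i j => hfr i j y) (hfs y)
  have hkD : k * (2 * D) ≤ √(n:ℝ) := by
    rw [div_le_iff₀ hsn] at hδ
    have : (k:ℝ) * D * 1 ≤ k * D * Real.exp ε := by gcongr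
    linarith
  have hne : ENNReal.ofReal (√(n:ℝ) ^ u) ≠ 0 := by
    rw [Ne, ENNReal.ofReal_eq_zero, not_le]; positivity
  rw [_root_.minimaxRisk, ENNReal.mul_iInf_of_ne hne ENNReal.ofReal_ne_top]
  refine le_iInf fun est => ?_
  rw [ENNReal.mul_iInf_of_ne hne ENNReal.ofReal_ne_top]
  refine le_iInf fun hest => ?_
  refine core_bound hk hn hg (Real.exp_nonneg ε) hG h0 hB hEn hδ hu hη hR hRD (hCD D hD) est hest
    fun a ha => ?_
  have hmem := local_mem_simplex hk0 ha hkD hn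
  rw [lintegral_lik_mul hg hG h0 (tilt_div_le (Real.exp_nonneg ε) hG hδ ha),
    ← marginal_local hk0 hf hf0 hfs hQf a hmem.1]
  exact le_iSup₂ (f := fun p (_ : p ∈ simplex k) =>
    ∫⁻ y, ENNReal.ofReal (∑ i, |est y i - p i| ^ u)
      ∂(Measure.pi fun _ : Fin n => marginal Q p)) _ hmem

end LocalModel

/-! ### Passage to the limit -/

lemma cTrunc_mono (u : ℝ) : Monotone (cTrunc u) := fun _ _ hrs =>
  lintegral_mono_set (Set.Icc_subset_Icc (neg_le_neg hrs) hrs)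

/-- The limit of the finite-sample bound along a sequence of growing truncations. -/
lemma liminf_bound {Y : Type} [MeasurableSpace Y] {k : ℕ} {ε u : ℝ} (hk : 2 ≤ k) (hε : 0 < ε)
    (hu : 1 ≤ u) {dstar : ℕ} (hd : IsOptDstar k ε dstar) {Q : Kernel (Fin k) Y}
    (hQ : IsPrivate ε Q) {η : ℝ} (hη : 0 < η) :
    ENNReal.ofReal ((1 - 1 / (k:ℝ)) ^ u *
        (k * ((Real.exp ε - 1) ^ 2 / gfun ε k dstar + η) ^ (-(u / 2)))) *
        ENNReal.ofReal (Cmom u) ≤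
      Filter.liminf (fun n : ℕ => (n : ℝ≥0∞) ^ (u/2) * _root_.minimaxRisk k n u Q) atTop := by
  obtain ⟨C, hC, hbound⟩ := minimax_bound hk hε hu hd hQ hη
  set L := Filter.liminf (fun n : ℕ => (n : ℝ≥0∞) ^ (u/2) * _root_.minimaxRisk k n u Q) atTop
    with hL
  set K : ℝ := k * ((Real.exp ε - 1) ^ 2 / gfun ε k dstar + η) ^ (-(u / 2)) with hK
  have hsη : 0 < √η := Real.sqrt_pos.mpr hη
  have hsη2 : √η * √η = η := Real.mul_self_sqrt hη.le
  -- `n → ∞` with the truncation `D = 2m/√η` fixed.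
  have hm : ∀ᶠ m : ℕ in atTop, ENNReal.ofReal ((1 - 1 / (k:ℝ)) ^ u * K) * cTrunc u m *
      (1 - (ENNReal.ofReal (η * (m:ℝ) ^ 2))⁻¹ * (k * C)) ≤ L := by
    have hDm : ∀ᶠ m : ℕ in atTop, √η ≤ m := tendsto_natCast_atTop_atTop.eventually_ge_atTop _
    filter_upwards [hDm] with m hDm
    set D : ℝ := 2 * m / √η with hD
    set R : ℝ := m / √η with hR
    have hm0 : (0:ℝ) < m := hsη.trans_le hDm
    have hR0 : 0 < R := by positivity
    have hDR : D = 2 * R := by rw [hD, hR]; ring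
    have hR1 : 1 ≤ R := by rw [hR, le_div_iff₀ hsη]; linarith
    have hRη : R * √η = m := by rw [hR]; field_simp
    have hηR : (η * (D - R)) ^ 2 = η * (m:ℝ) ^ 2 := by
      have : D - R = R := by rw [hDR]; ring
      rw [this, ← hRη, mul_pow, mul_pow, sq (√η), hsη2]; ring
    have hsq : Tendsto (fun n : ℕ => √(n:ℝ)) atTop atTop :=
      Real.tendsto_sqrt_atTop.comp tendsto_natCast_atTop_atTop
    have hlim0 : Tendsto (fun n : ℕ => k * D * Real.exp ε / √(n:ℝ)) atTop (nhds 0) :=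
      tendsto_const_nhds.div_atTop hsq
    have hφ : Tendsto (fun n : ℕ => -(2 * (2 * (n:ℝ) * (k * D * Real.exp ε / √(n:ℝ)) ^ 3))) atTop
        (nhds 0) := by
      have h1 : Tendsto (fun n : ℕ => -(4 * (k * D * Real.exp ε) ^ 3) / √(n:ℝ)) atTop (nhds 0) :=
        tendsto_const_nhds.div_atTop hsq
      refine h1.congr' ?_
      filter_upwards [eventually_gt_atTop 0] with n hn
      have hsn : 0 < √(n:ℝ) := Real.sqrt_pos.mpr (by exact_mod_cast hn)
      have hn2 : (n:ℝ) = √(n:ℝ) ^ 2 := (Real.sq_sqrt (Nat.cast_nonneg n)).symm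
      set s := √(n:ℝ)
      rw [hn2]
      field_simp
      ring
    have hlhs : Tendsto (fun n : ℕ => ENNReal.ofReal ((1 - 1 / (k:ℝ)) ^ u *
        (Real.exp (-(2 * (2 * n * (k * D * Real.exp ε / √n) ^ 3))) * K)) * cTrunc u (R * √η) *
          (1 - (ENNReal.ofReal ((η * (D - R)) ^ 2))⁻¹ * (k * C))) atTop
        (nhds (ENNReal.ofReal ((1 - 1 / (k:ℝ)) ^ u * K) * cTrunc u m *
          (1 - (ENNReal.ofReal (η * (m:ℝ) ^ 2))⁻¹ * (k * C)))) := by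
      rw [hRη, hηR]
      refine ENNReal.Tendsto.mul_const (ENNReal.Tendsto.mul_const ?_ ?_) ?_
      · refine ENNReal.tendsto_ofReal ?_
        have := ((Real.continuous_exp.tendsto 0).comp hφ).mul_const K
        simpa using this.const_mul ((1 - 1 / (k:ℝ)) ^ u)
      · exact Or.inr (cTrunc_ne_top (by linarith))
      · exact Or.inr (ne_top_of_le_ne_top ENNReal.one_ne_top tsub_le_self)
    rw [← hlhs.liminf_eq]
    refine Filter.liminf_le_liminf ?_
    filter_upwards [eventually_gt_atTop 0, hlim0.eventually_le_const (by norm_num : (0:ℝ) < 1 / 2)]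
      with n hn hδ
    refine (hbound D R n (by linarith) hR0.le (by linarith) hn hδ).trans (le_of_eq ?_)
    congr 1
    rw [Real.sqrt_eq_rpow, ← Real.rpow_mul (Nat.cast_nonneg n), ← ENNReal.ofReal_natCast n,
      ENNReal.ofReal_rpow_of_nonneg (Nat.cast_nonneg n) (by linarith)]
    congr 2
    ring
  -- `m → ∞`.
  have hsup : Tendsto (fun m : ℕ => cTrunc u m) atTop (nhds (⨆ m : ℕ, cTrunc u m)) :=
    tendsto_atTop_iSup fun a b hab => cTrunc_mono u (by exact_mod_cast hab)
  have hrem : Tendsto (fun m : ℕ => 1 - (ENNReal.ofReal (η * (m:ℝ) ^ 2))⁻¹ * (k * C)) atTop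
      (nhds 1) := by
    have h1 : Tendsto (fun m : ℕ => η * (m:ℝ) ^ 2) atTop atTop :=
      ((tendsto_pow_atTop two_ne_zero).comp tendsto_natCast_atTop_atTop).const_mul_atTop hη
    have h2 : Tendsto (fun m : ℕ => (ENNReal.ofReal (η * (m:ℝ) ^ 2))⁻¹) atTop (nhds 0) := by
      have := tendsto_inv_iff.mpr (ENNReal.tendsto_ofReal_atTop.comp h1)
      simpa using this
    have h3 : Tendsto (fun m : ℕ => (ENNReal.ofReal (η * (m:ℝ) ^ 2))⁻¹ * (k * C)) atTop
        (nhds 0) := by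
      have := ENNReal.Tendsto.mul_const (b := k * C) h2
        (Or.inr (ENNReal.mul_ne_top (ENNReal.natCast_ne_top k) hC))
      simpa using this
    have := ENNReal.Tendsto.sub (tendsto_const_nhds (x := (1:ℝ≥0∞))) h3
      (Or.inl ENNReal.one_ne_top)
    simpa using this
  have htot := ENNReal.Tendsto.mul
    (ENNReal.Tendsto.const_mul (a := ENNReal.ofReal ((1 - 1 / (k:ℝ)) ^ u * K)) hsup
      (Or.inr ENNReal.ofReal_ne_top)) (Or.inr ENNReal.one_ne_top) hrem (Or.inl one_ne_zero)
  rw [mul_one] at htot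
  refine le_trans ?_ (le_of_tendsto htot hm)
  gcongr
  exact le_iSup_cTrunc u

/-- The value of the local bound at `η = 0`. -/
lemma const_eq {k : ℕ} {ε u : ℝ} (hk : 2 ≤ k) (hε : 0 < ε) {dstar : ℕ}
    (hd : IsOptDstar k ε dstar) :
    (1 - 1 / (k:ℝ)) ^ u * (k * ((Real.exp ε - 1) ^ 2 / gfun ε k dstar) ^ (-(u / 2))) =
      k * Mconst k ε dstar ^ (u / 2) := by
  have hk2 : (2:ℝ) ≤ k := by exact_mod_cast hk
  have hE : 0 < Real.exp ε - 1 := sub_pos.mpr (Real.one_lt_exp_iff.mpr hε)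
  have hg := gfun_dstar_pos hε hd
  have hβ : 0 ≤ 1 - 1 / (k:ℝ) := by
    rw [sub_nonneg, div_le_one (by linarith)]; linarith
  have h1 : (1 - 1 / (k:ℝ)) ^ u = ((1 - 1 / (k:ℝ)) ^ 2) ^ (u / 2) := by
    rw [← Real.rpow_natCast, ← Real.rpow_mul hβ]
    congr 1; push_cast; ring
  have h2 : Mconst k ε dstar =
      (1 - 1 / (k:ℝ)) ^ 2 * ((Real.exp ε - 1) ^ 2 / gfun ε k dstar)⁻¹ := by
    unfold Mconst
    field_simp
  rw [h2, Real.mul_rpow (by positivity) (by positivity), h1,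
    Real.inv_rpow (by positivity), ← Real.rpow_neg (by positivity)]
  ring

theorem statement1 {Y : Type} [MeasurableSpace Y] (k : ℕ) (hk : 2 ≤ k) (ε u : ℝ)
    (hε : 0 < ε) (hu : 1 ≤ u) (dstar : ℕ) (hd : IsOptDstar k ε dstar)
    (Q : Kernel (Fin k) Y) (hQ : IsPrivate ε Q) :
    ENNReal.ofReal ((k:ℝ) * Cmom u * Mconst k ε dstar ^ (u/2)) ≤
      Filter.liminf (fun n : ℕ => (n : ℝ≥0∞) ^ (u/2) * minimaxRisk k n u Q) atTop := by
  set B := (Real.exp ε - 1) ^ 2 / gfun ε k dstar with hB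
  -- Let the prior precision `η` tend to `0` in `liminf_bound`.
  have hE : 0 < Real.exp ε - 1 := sub_pos.mpr (Real.one_lt_exp_iff.mpr hε)
  have hg := gfun_dstar_pos hε hd
  have hB0 : 0 < B := by positivity
  have hMk : 0 ≤ (k:ℝ) * Mconst k ε dstar ^ (u/2) := by
    unfold Mconst; positivity
  have hlim : Tendsto (fun η : ℝ => ENNReal.ofReal ((1 - 1 / (k:ℝ)) ^ u *
      (k * (B + η) ^ (-(u / 2)))) * ENNReal.ofReal (Cmom u)) (nhdsWithin 0 (Set.Ioi 0))
      (nhds (ENNReal.ofReal (k * Mconst k ε dstar ^ (u/2)) * ENNReal.ofReal (Cmom u))) := by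
    refine ENNReal.Tendsto.mul_const (ENNReal.tendsto_ofReal ?_) (Or.inr ENNReal.ofReal_ne_top)
    rw [← const_eq hk hε hd]
    refine Tendsto.const_mul _ (Tendsto.const_mul _ ?_)
    refine Tendsto.rpow_const ?_ (Or.inl hB0.ne')
    have : Tendsto (fun η : ℝ => B + η) (nhds 0) (nhds (B + 0)) := tendsto_id.const_add B
    rw [add_zero] at this
    exact this.mono_left nhdsWithin_le_nhds
  have heq : ENNReal.ofReal ((k:ℝ) * Cmom u * Mconst k ε dstar ^ (u/2)) =
      ENNReal.ofReal (k * Mconst k ε dstar ^ (u/2)) * ENNReal.ofReal (Cmom u) := by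
    rw [← ENNReal.ofReal_mul hMk]
    congr 1; ring
  rw [heq]
  refine le_of_tendsto hlim ?_
  filter_upwards [self_mem_nhdsWithin] with η hη
  exact liminf_bound hk hε hu hd hQ hη
end

section
/- Let q ∈ (0,1) and u > 0, and for each n let T_n be a binomial random variable with parameters n and q. Then lim_{n→∞} n^{u/2} E|T_n/n − q|^u = C_u (q(1−q))^{u/2}. -/
/-!
The law of `(T_n - n q) / √(n q (1 - q))` converges weakly to the standard normal law: its
characteristic function is, by the binomial theorem, an `n`-th power of a Bernoulli characteristic
function, so Lévy's continuity theorem applies (`tendsto_stdBinomial`).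

Since `|x| ^ u` is unbounded, weak convergence alone does not give convergence of the moments.
Hoeffding's lemma bounds the exponential moments of the standardised laws at `±1` uniformly in `n`
(`integral_exp_stdBinomial_le`), hence also the expectation of `|x| ^ (2 u)`. A uniform bound on
`E[f²]` makes the error of truncating `f` at level `M` of order `1 / M` uniformly in `n`, so the
expectations converge (`tendsto_integral_of_sq_bounded`). It remains to rescale by
`(q (1 - q)) ^ (u / 2)`.
-/

open MeasureTheory ProbabilityTheory Filter Real
open scoped ENNReal NNReal

namespace BinomialMoments

/-! ### Weak convergence and unbounded test functions -/

lemma sub_min_le_sq_div {a M : ℝ} (hM : 0 < M) : a - min a M ≤ a ^ 2 / M := by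
  rcases le_total a M with h | h
  · rw [min_eq_left h, sub_self]; positivity
  · rw [min_eq_right h, le_div_iff₀ hM]; nlinarith

/-- Truncating `f` at level `M` changes its expectation by at most `E[f²] / M`. -/
lemma abs_integral_sub_integral_min_le {μ : Measure ℝ} [IsProbabilityMeasure μ] {f : ℝ → ℝ}
    {K M : ℝ} (hM : 0 < M) (hf : Continuous f) (hf2 : Integrable (fun x => f x ^ 2) μ)
    (hK : ∫ x, f x ^ 2 ∂μ ≤ K) :
    |∫ x, f x ∂μ - ∫ x, min (f x) M ∂μ| ≤ K / M := by
  have hfi : Integrable f μ :=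
    ((memLp_two_iff_integrable_sq hf.aestronglyMeasurable).2 hf2).integrable one_le_two
  have hmin : Integrable (fun x => min (f x) M) μ := hfi.inf (integrable_const M)
  rw [← integral_sub hfi hmin, abs_of_nonneg
    (integral_nonneg fun x => sub_nonneg.2 (min_le_left _ _))]
  calc ∫ x, (f x - min (f x) M) ∂μ ≤ ∫ x, f x ^ 2 / M ∂μ :=
        integral_mono (hfi.sub hmin) (hf2.div_const M) fun x => sub_min_le_sq_div hM
    _ = (∫ x, f x ^ 2 ∂μ) / M := integral_div _ _
    _ ≤ K / M := by gcongr

/-- Weak convergence passes to the expectation of an unbounded continuous function as soon as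
its second moments stay bounded, since this makes the truncation error uniformly small. -/
lemma tendsto_integral_of_sq_bounded {μ : ℕ → ProbabilityMeasure ℝ} {μ₀ : ProbabilityMeasure ℝ}
    (hμ : Tendsto μ atTop (nhds μ₀)) {f : ℝ → ℝ} (hf : Continuous f) (hf0 : ∀ x, 0 ≤ f x) {K : ℝ}
    (hi : ∀ᶠ n in atTop, Integrable (fun x => f x ^ 2) (μ n : Measure ℝ))
    (hK : ∀ᶠ n in atTop, ∫ x, f x ^ 2 ∂(μ n : Measure ℝ) ≤ K)
    (hi₀ : Integrable (fun x => f x ^ 2) (μ₀ : Measure ℝ)) :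
    Tendsto (fun n => ∫ x, f x ∂(μ n : Measure ℝ)) atTop (nhds (∫ x, f x ∂(μ₀ : Measure ℝ))) := by
  set L : ℝ := max K (∫ x, f x ^ 2 ∂(μ₀ : Measure ℝ))
  have hL : 0 ≤ L := le_max_of_le_right (integral_nonneg fun x => sq_nonneg _)
  rw [Metric.tendsto_nhds]
  intro ε hε
  -- With this truncation level each of the two truncation errors is below `ε / 3`.
  set M : ℝ := 3 * (L + 1) / ε
  have hM : 0 < M := by positivity
  have hLM : L / M < ε / 3 := by
    rw [div_lt_iff₀ hM]
    have : ε / 3 * M = L + 1 := by simp only [M]; field_simp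
    linarith
  let g : BoundedContinuousFunction ℝ ℝ :=
    BoundedContinuousFunction.ofNormedAddCommGroup (fun x => min (f x) M)
      (hf.min continuous_const) M fun x => by
        rw [norm_of_nonneg (le_min (hf0 x) hM.le)]; exact min_le_right _ _
  have hg := (ProbabilityMeasure.tendsto_iff_forall_integral_tendsto.1 hμ) g
  filter_upwards [hi, hK, (Metric.tendsto_nhds.1 hg) (ε / 3) (by positivity)] with n hin hKn hgn
  have h1 := abs_integral_sub_integral_min_le hM hf hin (hKn.trans (le_max_left _ _ : K ≤ L))
  have h2 := abs_integral_sub_integral_min_le hM hf hi₀ (le_max_right _ _ : _ ≤ L)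
  rw [dist_eq] at hgn ⊢
  change |∫ x, min (f x) M ∂(μ n : Measure ℝ) - ∫ x, min (f x) M ∂(μ₀ : Measure ℝ)| < ε / 3 at hgn
  rw [abs_le] at h1 h2
  rw [abs_lt] at hgn ⊢
  constructor <;> linarith [h1.1, h1.2, h2.1, h2.2, hgn.1, hgn.2]

/-! ### The standardised binomial law -/

/-- The law of `(T - n q) / (√n σ)` with `T ~ Binomial(n, q)` and `σ² = q (1 - q)`.
At `n = 0` the division by zero makes it the Dirac mass at `0`. -/
noncomputable def stdBinomial (q : unitInterval) (n : ℕ) : Measure ℝ :=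
  (binomial n q).map fun k : ℕ => ((k : ℝ) - n * q) / (√n * √(q * (1 - q)))

instance (q : unitInterval) (n : ℕ) : IsProbabilityMeasure (stdBinomial q n) :=
  Measure.isProbabilityMeasure_map Measurable.of_discrete.aemeasurable

variable {E : Type*} [NormedAddCommGroup E]

lemma integrable_stdBinomial (q : unitInterval) (n : ℕ) {f : ℝ → E} (hf : Continuous f) :
    Integrable f (stdBinomial q n) := by
  exact (integrable_map_measure hf.aestronglyMeasurable Measurable.of_discrete.aemeasurable).2 (integrable_binomial _)

lemma integral_stdBinomial [NormedSpace ℝ E] [CompleteSpace E] (q : unitInterval) (n : ℕ)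
    {f : ℝ → E} (hf : Continuous f) :
    ∫ x, f x ∂(stdBinomial q n) = ∑ k ∈ Finset.range (n + 1),
      ((n.choose k : ℝ) * (q : ℝ) ^ k * (1 - (q : ℝ)) ^ (n - k)) •
        f (((k : ℝ) - n * q) / (√n * √(q * (1 - q)))) := by
  rw [stdBinomial, integral_map Measurable.of_discrete.aemeasurable
    (integrable_stdBinomial q n hf).aestronglyMeasurable, integral_binomial]
  refine Finset.sum_congr ?_ fun _ _ => rfl
  ext k; simp

/-- The exponential transform of the centred binomial law is the `n`-th power of that of the
centred Bernoulli law; this is the binomial theorem. -/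
lemma sum_choose_mul_cexp (q c : ℂ) (n : ℕ) :
    ∑ k ∈ Finset.range (n + 1), (n.choose k * q ^ k * (1 - q) ^ (n - k)) *
      Complex.exp (c * (k - n * q)) =
      (q * Complex.exp (c * (1 - q)) + (1 - q) * Complex.exp (c * (0 - q))) ^ n := by
  rw [add_pow]
  refine Finset.sum_congr rfl fun k hk => ?_
  have hk' : k ≤ n := Nat.lt_succ_iff.1 (Finset.mem_range.1 hk)
  have : Complex.exp (c * (k - n * q)) =
      Complex.exp (c * (1 - q)) ^ k * Complex.exp (c * (0 - q)) ^ (n - k) := by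
    rw [← Complex.exp_nat_mul, ← Complex.exp_nat_mul, ← Complex.exp_add, Nat.cast_sub hk']
    ring_nf
  rw [this, mul_pow, mul_pow]
  ring

lemma sum_choose_mul_exp (q c : ℝ) (n : ℕ) :
    ∑ k ∈ Finset.range (n + 1), (n.choose k * q ^ k * (1 - q) ^ (n - k)) * exp (c * (k - n * q)) =
      (q * exp (c * (1 - q)) + (1 - q) * exp (c * (0 - q))) ^ n := by
  exact_mod_cast sum_choose_mul_cexp q c n

/-- Hoeffding's lemma for the centred Bernoulli law. -/
lemma bernoulli_mgf_le (q : unitInterval) (c : ℝ) :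
    (q : ℝ) * exp (c * (1 - q)) + (1 - q) * exp (c * (0 - q)) ≤ exp (c ^ 2 / 8) := by
  have hae : ∀ᵐ x ∂(bernoulliMeasure (1 : ℝ) 0 q), x - (q : ℝ) ∈ Set.Icc (-(q : ℝ)) (1 - q) := by
    have hs : MeasurableSet {x : ℝ | x - (q : ℝ) ∈ Set.Icc (-(q : ℝ)) (1 - q)} := by measurability
    refine bernoulliMeasure_apply_of_notMem_of_notMem q hs.compl ?_ ?_
    · simp
    · simp
  have h := (hasSubgaussianMGF_of_mem_Icc_of_integral_eq_zero (X := fun x : ℝ => x - (q : ℝ))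
    (by fun_prop) hae (by rw [integral_bernoulliMeasure]; simp; ring)).mgf_le c
  rw [mgf, integral_bernoulliMeasure] at h
  simp at h
  convert h using 2
  · simp
  · ring

variable {q : unitInterval}

/-! ### Convergence of the absolute moments -/

/-- The **de Moivre–Laplace theorem**: the characteristic function of `stdBinomial q n` at `t` is
the `n`-th power of that of the standardised Bernoulli law at `t / √n`, and Lévy's theorem
applies. -/
lemma tendsto_stdBinomial (hq0 : 0 < (q : ℝ)) (hq1 : (q : ℝ) < 1) :
    Tendsto (β := ProbabilityMeasure ℝ) (fun n => ⟨stdBinomial q n, inferInstance⟩) atTop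
      (nhds (X := ProbabilityMeasure ℝ) ⟨gaussianReal 0 1, inferInstance⟩) := by
  have hv : 0 < (q : ℝ) * (1 - q) := mul_pos hq0 (by linarith)
  have hσ : √((q : ℝ) * (1 - q)) ^ 2 = q * (1 - q) := sq_sqrt hv.le
  have hσ0 : √((q : ℝ) * (1 - q)) ≠ 0 := (sqrt_pos.2 hv).ne'
  refine ProbabilityMeasure.tendsto_iff_tendsto_charFun.2 fun t => ?_
  have key := tendsto_charFun_inv_sqrt_mul_pow (P := bernoulliMeasure (1 : ℝ) 0 q)
    (X := fun x => (x - q) / √(q * (1 - q))) (by fun_prop)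
    (by rw [integral_bernoulliMeasure]; simp; ring)
    (by
      rw [integral_bernoulliMeasure]
      simp [div_pow, hσ]
      have h1 : 1 - (q : ℝ) ≠ 0 := by linarith
      field_simp
      ring) t
  have hlim : charFun (gaussianReal 0 1) t = Complex.exp (-t ^ 2 / 2) := by
    simp [charFun_gaussianReal, neg_div]
  change Tendsto (fun n => charFun (stdBinomial q n) t) atTop
    (nhds (charFun (gaussianReal 0 1) t))
  rw [hlim]
  refine key.congr fun n => ?_
  rw [charFun_apply_real, charFun_apply_real, integral_map (by fun_prop) (by fun_prop),
    integral_bernoulliMeasure, integral_stdBinomial q n (by fun_prop)]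
  have := sum_choose_mul_cexp q (t / (√n * √(q * (1 - q))) * Complex.I) n
  convert this.symm using 1
  · congr 1
    simp only [Complex.real_smul]
    push_cast
    congr 3 <;> ring
  · refine Finset.sum_congr rfl fun k _ => ?_
    rw [Complex.real_smul]
    push_cast
    congr 2
    ring

/-- The exponential moments at `±1` are bounded uniformly in `n`, by Hoeffding's lemma. -/
lemma integral_exp_stdBinomial_le (hq0 : 0 < (q : ℝ)) (hq1 : (q : ℝ) < 1) {n : ℕ} (hn : n ≠ 0)
    {s : ℝ} (hs : s ^ 2 = 1) :
    ∫ x, exp (s * x) ∂(stdBinomial q n) ≤ exp (1 / (8 * (q * (1 - q)))) := by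
  have hv : 0 < (q : ℝ) * (1 - q) := mul_pos hq0 (by linarith)
  have hσ : √((q : ℝ) * (1 - q)) ^ 2 = q * (1 - q) := sq_sqrt hv.le
  rw [integral_stdBinomial q n (by fun_prop)]
  set c : ℝ := s / (√n * √(q * (1 - q)))
  have hc : n * (c ^ 2 / 8) = 1 / (8 * (q * (1 - q))) := by
    have hn' : (n : ℝ) ≠ 0 := by exact_mod_cast hn
    simp only [c, div_pow, mul_pow, hσ, hs, sq_sqrt (Nat.cast_nonneg n)]
    field_simp
  calc _ = ((q : ℝ) * exp (c * (1 - q)) + (1 - q) * exp (c * (0 - q))) ^ n := by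
        rw [← sum_choose_mul_exp]
        refine Finset.sum_congr rfl fun k _ => ?_
        rw [smul_eq_mul]; simp only [c]; ring_nf
    _ ≤ exp (c ^ 2 / 8) ^ n := by
        have : (0 : ℝ) ≤ 1 - q := by linarith
        gcongr
        exact bernoulli_mgf_le q c
    _ = exp (1 / (8 * (q * (1 - q)))) := by rw [← exp_nat_mul, hc]

/-- Moments are dominated by exponential moments, with a constant depending only on the order. -/
lemma sq_abs_rpow_le {u : ℝ} (hu : 0 < u) (x : ℝ) :
    (|x| ^ u) ^ 2 ≤ (u * 2) ^ (u * 2) * (exp (1 * x) + exp (-1 * x)) := by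
  have h := rpow_abs_le_mul_max_exp x (t := 1) (p := u * 2) (by positivity) one_ne_zero
  rw [abs_one, div_one] at h
  rw [← rpow_natCast, ← rpow_mul (abs_nonneg x)]
  refine h.trans ?_
  gcongr
  exact max_le (by linarith [exp_pos (-1 * x)]) (by linarith [exp_pos (1 * x)])

lemma tendsto_integral_abs_rpow_stdBinomial (hq0 : 0 < (q : ℝ)) (hq1 : (q : ℝ) < 1)
    {u : ℝ} (hu : 0 < u) :
    Tendsto (fun n => ∫ x, |x| ^ u ∂(stdBinomial q n)) atTop
      (nhds (∫ x, |x| ^ u ∂(gaussianReal 0 1))) := by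
  have hcont : Continuous fun x : ℝ => |x| ^ u := continuous_abs.rpow_const fun _ => .inr hu.le
  have hcont2 : Continuous fun x : ℝ => (|x| ^ u) ^ 2 := hcont.pow 2
  refine tendsto_integral_of_sq_bounded (tendsto_stdBinomial hq0 hq1) hcont
    (fun x => by positivity)
    (K := (u * 2) ^ (u * 2) *
      (exp (1 / (8 * (q * (1 - q)))) + exp (1 / (8 * (q * (1 - q))))))
    (.of_forall fun n => integrable_stdBinomial q n hcont2) ?_ ?_
  · filter_upwards [eventually_ne_atTop 0] with n hn
    have hi (s : ℝ) : Integrable (fun x => exp (s * x)) (stdBinomial q n) :=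
      integrable_stdBinomial q n (by fun_prop)
    calc ∫ x, (|x| ^ u) ^ 2 ∂(stdBinomial q n)
        ≤ ∫ x, (u * 2) ^ (u * 2) * (exp (1 * x) + exp (-1 * x)) ∂(stdBinomial q n) :=
          integral_mono (integrable_stdBinomial q n hcont2)
            (((hi 1).add (hi (-1))).const_mul _) (sq_abs_rpow_le hu)
      _ = (u * 2) ^ (u * 2) * (∫ x, exp (1 * x) ∂(stdBinomial q n) +
            ∫ x, exp (-1 * x) ∂(stdBinomial q n)) := by
          rw [integral_const_mul, integral_add (hi 1) (hi (-1))]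
      _ ≤ _ := by
          gcongr
          · exact integral_exp_stdBinomial_le hq0 hq1 hn (by norm_num)
          · exact integral_exp_stdBinomial_le hq0 hq1 hn (by norm_num)
  · refine (((integrable_exp_mul_gaussianReal 1).add
      (integrable_exp_mul_gaussianReal (-1))).const_mul ((u * 2) ^ (u * 2))).mono'
      hcont2.aestronglyMeasurable (.of_forall fun x => ?_)
    rw [norm_of_nonneg (by positivity)]
    exact sq_abs_rpow_le hu x

end BinomialMoments

theorem statement18 (q : ℝ) (hq0 : 0 < q) (hq1 : q < 1) (u : ℝ) (hu : 0 < u) :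
    Filter.Tendsto (fun n : ℕ => (n:ℝ) ^ (u/2) *
        ∑ t ∈ Finset.range (n+1),
          (n.choose t : ℝ) * q^t * (1-q)^(n-t) * |(t:ℝ)/(n:ℝ) - q| ^ u)
      atTop (nhds (Cmom u * (q*(1-q)) ^ (u/2))) := by
  have hv : 0 < q * (1 - q) := mul_pos hq0 (by linarith)
  let p : unitInterval := ⟨q, hq0.le, hq1.le⟩
  have hlim := (BinomialMoments.tendsto_integral_abs_rpow_stdBinomial (q := p) hq0 hq1 hu).mul_const
    ((q * (1 - q)) ^ (u / 2))
  refine hlim.congr' ?_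
  filter_upwards [eventually_ne_atTop 0] with n hn
  have hn' : (0 : ℝ) < n := by exact_mod_cast Nat.pos_of_ne_zero hn
  rw [BinomialMoments.integral_stdBinomial p n
    (continuous_abs.rpow_const fun _ => .inr hu.le), Finset.sum_mul, Finset.mul_sum]
  refine Finset.sum_congr rfl fun k _ => ?_
  have hrpow {a : ℝ} (ha : 0 < a) : a ^ (u / 2) = √a ^ u := by
    rw [sqrt_eq_rpow, ← rpow_mul ha.le]; ring_nf
  -- The two normalisations of the deviation agree: `|x_k| σ = √n |k / n - q|`.
  have hx : |((k : ℝ) - n * q) / (√n * √(q * (1 - q)))| * √(q * (1 - q)) = √n * |k / n - q| := by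
    have h1 : 0 < √(q * (1 - q)) := sqrt_pos.2 hv
    have h2 : 0 < √(n : ℝ) := sqrt_pos.2 hn'
    have h3 : (k : ℝ) / n - q = (k - n * q) / (√n * √n) := by
      rw [mul_self_sqrt hn'.le]; field_simp
    rw [h3, abs_div, abs_div, abs_of_pos (mul_pos h2 h1), abs_of_pos (mul_pos h2 h2)]
    field_simp
  have hx' := congrArg (· ^ u) hx
  simp only [mul_rpow (abs_nonneg _) (sqrt_nonneg _), mul_rpow (sqrt_nonneg _) (abs_nonneg _),
    ← hrpow hv, ← hrpow hn'] at hx'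
  change (_ * q ^ k * (1 - q) ^ (n - k)) • |((k : ℝ) - n * q) / (√n * √(q * (1 - q)))| ^ u * _ = _
  rw [smul_eq_mul, mul_assoc, hx']
  ring
end
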